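/- Assume q ≤ 1/2, q + 2λ ≤ 1, λ > 0, and 3 ≤ m ≤ K. Let 1 ≤ i < j ≤ n. Then E_ij[S_ij] = ((n−2)!/(n−m)!)·(λ^{(m+1)/2}/K)^{m−2} and E_¬ij[S_ij] = 0. Moreover, if for some ρ > 0 both (n−2)·λ^{(m+1)/2}/K ≥ ρ·(m−2)²·(1+q̄/λ)^{(m+1)/2} and ((n−2)/K²)·(λ²/q̄)^{(m+1)/2} ≥ ρ·(m−2) hold, then var_ij(S_ij) ≤ E_ij[S_ij]²·[ (2/ρ)^{m−2} + ( (m−2)·(1+q̄/λ)^{m+1} + 1/ρ )^{m−2} · (1+q̄/λ)^{1/2} · λ^{1/2} ] and var_¬ij(S_ij) ≤ E_ij[S_ij]²·[ (2/ρ)^{m−2} + (1/ρ)^{m−2} ]. -/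

import Mathlib

/-!
Write `m = N + 2`, `q̄ = q (1 - q)` and `p̄ = q̄ + λ (1 - 2 q)`. The product attached to an
injection depends only on the set `A` of images of `v₃, …, v_m`, so `S_{ij} = N! ∑_A χ_A`, the sum
running over the `N`-subsets of `{1, …, n} \ {i, j}` (`cliqueStat_eq`). The first two moments of
`S_{ij}` thus reduce to the mixed moments of `χ_A` and `χ_{A'}`; the case `A' = ∅` gives the mean.

Given the labels, the edges are independent: an edge of exactly one of the two monomials contributes
`λ` or `0` according to whether its ends share a label, a common edge contributes `p̄` or `q̄`.

* If `A ⊄ A'`, the edges of exactly one monomial connect `{i, j} ∪ A ∪ A'`, so only labelings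
  constant there count (`edgeExpec_linkEdges_of_not_subset`). Hence the mixed moment is `0` when
  `z_i ≠ z_j`, and when `z_i = z_j` it is the squared mean of `χ_A` times
  `(p̄ / λ²)^{t (t + 3) / 2} K^t`, where `t = |A ∩ A'|`. The overlap is hypergeometric and dominated
  by `C(N, t) (N / (n - 2))^t` (`sum_erase_inter_le`); the term `t = 0` is at most the squared mean,
  which the variance subtracts, and the rest is summed by the binomial theorem
  (`sum_choose_mul_pow_le`).

* If `A = A'`, reveal the vertices of `A` one at a time and count those whose label has been seen
  before. There are at most `(m + 1) / 2` monochromatic edges per such repeat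
  (`two_mul_card_filter_linkEdges_add_repeats_le`), and the `k`-th vertex of `A` (from `k = 0`) has
  at most `k + d` labels that repeat, `d` being the number of labels of `i, j`
  (`DeterminedOn.expect_pow_repeats_le`). With the two conditions on `n` the diagonal is at most the
  squared mean times `ρ^{-N} ∏_{k < N} (1 + (k + d) / N)`. The product is at most `2^N` for `d = 1`,
  that is `z_i = z_j`, and at most `2^N + 1` for `d = 2`, that is `z_i ≠ z_j`.
-/

open Classical Finset

noncomputable section

namespace SBM

/-- Index type for the edge slots of a graph on `n` nodes: ordered pairs `i < j`. -/
abbrev Pairs (n : ℕ) := {p : Fin n × Fin n // p.1 < p.2}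

/-- A configuration of edges: one Boolean per pair `i < j`. -/
abbrev EdgeConf (n : ℕ) := Pairs n → Bool

/-- Community labels of the `n` nodes, with `K` communities. -/
abbrev Lab (n K : ℕ) := Fin n → Fin K

/-- The recentered symmetric adjacency entries `Y i j = Y*_{ij} - q` (and `0` on the diagonal). -/
def Ymat (n : ℕ) (q : ℝ) (y : EdgeConf n) (i j : Fin n) : ℝ :=
  if h : i = j then 0
  else (if y ⟨(min i j, max i j), min_lt_max.mpr h⟩ then 1 else 0) - q

/-- Conditional connection probability of a pair given the labels. -/
def pEdge (n K : ℕ) (q lam : ℝ) (z : Lab n K) (p : Pairs n) : ℝ :=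
  if z p.1.1 = z p.1.2 then q + lam else q

/-- SBM probability weight of a configuration `(z, y)`: labels are i.i.d. uniform on `Fin K`
and, conditionally on `z`, edges are independent Bernoulli. -/
def wt (n K : ℕ) (q lam : ℝ) (z : Lab n K) (y : EdgeConf n) : ℝ :=
  ((K : ℝ)⁻¹) ^ n *
    ∏ p : Pairs n, (if y p then pEdge n K q lam z p else 1 - pEdge n K q lam z p)

/-- Expectation under the SBM. -/
def expec (n K : ℕ) (q lam : ℝ) (F : Lab n K → EdgeConf n → ℝ) : ℝ :=
  ∑ z : Lab n K, ∑ y : EdgeConf n, wt n K q lam z y * F z y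

/-- Expectation conditionally on `z i = z j`. -/
def expecEq (n K : ℕ) (q lam : ℝ) (i j : Fin n) (F : Lab n K → EdgeConf n → ℝ) : ℝ :=
  expec n K q lam (fun z y => if z i = z j then F z y else 0) /
    expec n K q lam (fun z _ => if z i = z j then 1 else 0)

/-- Expectation conditionally on `z i ≠ z j`. -/
def expecNe (n K : ℕ) (q lam : ℝ) (i j : Fin n) (F : Lab n K → EdgeConf n → ℝ) : ℝ :=
  expec n K q lam (fun z y => if z i ≠ z j then F z y else 0) /
    expec n K q lam (fun z _ => if z i ≠ z j then 1 else 0)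

/-- Variance conditionally on `z i = z j`. -/
def varEq (n K : ℕ) (q lam : ℝ) (i j : Fin n) (F : Lab n K → EdgeConf n → ℝ) : ℝ :=
  expecEq n K q lam i j (fun z y => F z y ^ 2) - expecEq n K q lam i j F ^ 2

/-- Variance conditionally on `z i ≠ z j`. -/
def varNe (n K : ℕ) (q lam : ℝ) (i j : Fin n) (F : Lab n K → EdgeConf n → ℝ) : ℝ :=
  expecNe n K q lam i j (fun z y => F z y ^ 2) - expecNe n K q lam i j F ^ 2

/-- The (centered) membership indicator `x = 1{z i0 = z i1} - 1/K`. -/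
def xind (n K : ℕ) (i0 i1 : Fin n) (z : Lab n K) : ℝ :=
  (if z i0 = z i1 then 1 else 0) - 1 / K

/-- The edges of the `m`-clique with the edge `(0,1)` removed. -/
def cliqueEdges (m : ℕ) (hm : 2 ≤ m) : Finset (Fin m × Fin m) :=
  Finset.univ.filter fun p : Fin m × Fin m =>
    p.1 < p.2 ∧ ¬(p.1 = (⟨0, by omega⟩ : Fin m) ∧ p.2 = (⟨1, by omega⟩ : Fin m))

/-- The clique-count statistic `S_{ij}` restricted to injections with range inside `T`:
sum over injections `π` with `π 0 = i`, `π 1 = j` of the product of the `Y` entries over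
the edges of the `m`-clique minus the edge `(0,1)`. -/
def cliqueStatOn (n : ℕ) (q : ℝ) (m : ℕ) (hm : 2 ≤ m) (i j : Fin n) (T : Finset (Fin n))
    (y : EdgeConf n) : ℝ :=
  ∑ π : Fin m ↪ Fin n,
    if π ⟨0, by omega⟩ = i ∧ π ⟨1, by omega⟩ = j ∧ (∀ v, π v ∈ T) then
      ∏ p ∈ cliqueEdges m hm, Ymat n q y (π p.1) (π p.2)
    else 0

/-- The clique-count statistic `S_{ij}`. -/
def cliqueStat (n : ℕ) (q : ℝ) (m : ℕ) (hm : 2 ≤ m) (i j : Fin n) (y : EdgeConf n) : ℝ :=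
  cliqueStatOn n q m hm i j Finset.univ y

section Overlap

theorem descFactorial_mul_pow_le {N u : ℕ} (h : N ≤ u) (s : ℕ) :
    N.descFactorial s * u ^ s ≤ u.descFactorial s * N ^ s := by
  simp only [Nat.descFactorial_eq_prod_range, pow_eq_prod_const, ← prod_mul_distrib]
  refine prod_le_prod' fun k _ => ?_
  rw [Nat.sub_mul, Nat.sub_mul, mul_comm u N]
  exact Nat.sub_le_sub_left (Nat.mul_le_mul_left k h) _

theorem choose_sub_le_mul_div_pow {s N u : ℕ} (hs : s ≤ N) (hu : N ≤ u) :
    ((u - s).choose (N - s) : ℝ) ≤ u.choose N * ((N : ℝ) / u) ^ s := by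
  have hus : 0 < u ^ s := by
    rcases u.eq_zero_or_pos with rfl | h
    · simp [show s = 0 by omega]
    · positivity
  have hpos : 0 < u.descFactorial s := Nat.descFactorial_pos.2 (hs.trans hu)
  have hchoose : (u - s).choose (N - s) * u.descFactorial s = u.choose N * N.descFactorial s := by
    rw [Nat.descFactorial_eq_factorial_mul_choose, Nat.descFactorial_eq_factorial_mul_choose,
      mul_left_comm, mul_left_comm _ s.factorial, Nat.choose_mul hs, mul_comm (u.choose s)]
  have hnat : (u - s).choose (N - s) * u ^ s ≤ u.choose N * N ^ s := by
    refine Nat.le_of_mul_le_mul_right ?_ hpos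
    calc (u - s).choose (N - s) * u ^ s * u.descFactorial s
        = u.choose N * (N.descFactorial s * u ^ s) := by
          rw [mul_right_comm, hchoose, mul_assoc]
      _ ≤ u.choose N * (u.descFactorial s * N ^ s) := by
          gcongr u.choose N * ?_
          exact descFactorial_mul_pow_le hu s
      _ = u.choose N * N ^ s * u.descFactorial s := by ring
  rw [div_pow, ← mul_div_assoc, le_div_iff₀ (by exact_mod_cast hus)]
  exact_mod_cast hnat

theorem one_le_choose_mul_div_pow {N u : ℕ} (hu : N ≤ u) :
    1 ≤ u.choose N * ((N : ℝ) / u) ^ N := by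
  simpa only [Nat.sub_self, Nat.choose_zero_right, Nat.cast_one] using
    choose_sub_le_mul_div_pow le_rfl hu

variable {α : Type*} [DecidableEq α]

theorem card_filter_superset_powersetCard {U C : Finset α} {N : ℕ} (hC : C ⊆ U) (hN : #C ≤ N) :
    #{A ∈ powersetCard N U | C ⊆ A} = (#U - #C).choose (N - #C) := by
  rw [← card_sdiff_of_subset hC, ← card_powersetCard]
  refine card_nbij' (· \ C) (· ∪ C) ?_ ?_ ?_ ?_
  · intro A hA
    obtain ⟨hA, hCA⟩ := mem_filter.1 hA
    obtain ⟨hAU, rfl⟩ := mem_powersetCard.1 hA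
    exact mem_powersetCard.2 ⟨sdiff_subset_sdiff hAU le_rfl, card_sdiff_of_subset hCA⟩
  · intro A hA
    obtain ⟨hAU, hcard⟩ := mem_powersetCard.1 hA
    refine mem_filter.2 ⟨mem_powersetCard.2 ⟨union_subset (hAU.trans sdiff_subset) hC, ?_⟩,
      subset_union_right⟩
    rw [card_union_of_disjoint (sdiff_disjoint.mono_left hAU), hcard, Nat.sub_add_cancel hN]
  · intro A hA
    exact sdiff_union_of_subset (mem_filter.1 hA).2
  · intro A hA
    exact union_sdiff_cancel_right (sdiff_disjoint.mono_left (mem_powersetCard.1 hA).1)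

theorem sum_erase_inter_le {U A : Finset α} {N : ℕ} (hA : A ∈ powersetCard N U) {T : ℕ → ℝ}
    (hT : ∀ s, 0 ≤ T s) :
    ∑ A' ∈ (powersetCard N U).erase A, T #(A ∩ A') ≤
      #(powersetCard N U) * ∑ s ∈ range N, N.choose s * (((N : ℝ) / #U) ^ s * T s) := by
  obtain ⟨hAU, hAN⟩ := mem_powersetCard.1 hA
  have hNU : N ≤ #U := hAN ▸ card_le_card hAU
  have hinter : ∀ A' ∈ (powersetCard N U).erase A, A ∩ A' ∈ {C ∈ A.ssubsets | C ⊆ A'} := by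
    intro A' hA'
    obtain ⟨hne, hA'⟩ := mem_erase.1 hA'
    refine mem_filter.2 ⟨mem_ssubsets.2 (inter_subset_left.ssubset_of_ne fun h => hne ?_),
      inter_subset_right⟩
    exact (eq_of_subset_of_card_le (inter_eq_left.1 h) (by
      rw [(mem_powersetCard.1 hA').2, hAN])).symm
  calc ∑ A' ∈ (powersetCard N U).erase A, T #(A ∩ A')
      ≤ ∑ A' ∈ (powersetCard N U).erase A, ∑ C ∈ A.ssubsets with C ⊆ A', T #C :=
        sum_le_sum fun A' hA' => single_le_sum (f := fun C => T #C) (fun C _ => hT _)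
          (hinter A' hA')
    _ ≤ ∑ A' ∈ powersetCard N U, ∑ C ∈ A.ssubsets with C ⊆ A', T #C :=
        sum_le_sum_of_subset_of_nonneg (erase_subset _ _)
          fun A' _ _ => sum_nonneg fun C _ => hT _
    _ = ∑ C ∈ A.ssubsets, #{A' ∈ powersetCard N U | C ⊆ A'} * T #C := by
        simp only [sum_filter]
        rw [sum_comm]
        simp only [← sum_filter, sum_const, nsmul_eq_mul]
    _ ≤ ∑ C ∈ A.ssubsets, #(powersetCard N U) * (((N : ℝ) / #U) ^ #C * T #C) := by
        refine sum_le_sum fun C hC => ?_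
        have hCA : C ⊆ A := (mem_ssubsets.1 hC).subset
        have hCN : #C ≤ N := hAN ▸ card_le_card hCA
        rw [card_filter_superset_powersetCard (hCA.trans hAU) hCN, ← mul_assoc, card_powersetCard]
        exact mul_le_mul_of_nonneg_right (choose_sub_le_mul_div_pow hCN hNU) (hT _)
    _ = #(powersetCard N U) * ∑ s ∈ range N, N.choose s * (((N : ℝ) / #U) ^ s * T s) := by
        have hsum := sum_powerset_apply_card (x := A) fun s => ((N : ℝ) / #U) ^ s * T s
        rw [← sum_erase_add _ _ (mem_powerset_self A), hAN, sum_range_succ, Nat.choose_self,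
          one_smul, add_left_inj] at hsum
        simp only [nsmul_eq_mul] at hsum
        rw [← mul_sum, ← hsum]
        rfl

end Overlap

section Numerics

theorem sum_choose_mul_pow_le {N : ℕ} {x β c : ℝ} (hx : 0 ≤ x) (hβ : 1 ≤ β)
    (h : x * β ^ (N + 3) ≤ c) :
    ∑ t ∈ range N, N.choose t * (x ^ t * β ^ (t * (t + 3))) ≤ 1 + (1 + c) ^ N / β := by
  have hβ0 : 0 < β := one_pos.trans_le hβ
  have hterm : ∀ t ∈ range N, t ≠ 0 →
      x ^ t * β ^ (t * (t + 3)) ≤ c ^ t / β := by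
    intro t ht h0
    have htN : t + 1 ≤ N := mem_range.1 ht
    rw [le_div_iff₀ hβ0]
    calc x ^ t * β ^ (t * (t + 3)) * β = x ^ t * β ^ (t * (t + 3) + 1) := by ring
      _ ≤ x ^ t * β ^ ((N + 3) * t) := by
        gcongr ?_ * ?_
        refine pow_le_pow_right₀ hβ ?_
        nlinarith [Nat.mul_le_mul_right t htN, Nat.pos_of_ne_zero h0]
      _ = (x * β ^ (N + 3)) ^ t := by rw [mul_pow, ← pow_mul]
      _ ≤ c ^ t := by gcongr
  have hc : 0 ≤ c := le_trans (by positivity) h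
  calc ∑ t ∈ range N, N.choose t * (x ^ t * β ^ (t * (t + 3)))
      ≤ ∑ t ∈ range N, ((if t = 0 then 1 else 0) + N.choose t * (c ^ t / β)) := by
        refine sum_le_sum fun t ht => ?_
        rcases eq_or_ne t 0 with rfl | h0
        · simp only [Nat.choose_zero_right, Nat.cast_one, pow_zero, zero_mul, mul_one, if_true]
          have : 0 ≤ 1 / β := by positivity
          linarith
        · rw [if_neg h0, zero_add]
          exact mul_le_mul_of_nonneg_left (hterm t ht h0) (Nat.cast_nonneg _)
    _ ≤ 1 + ∑ t ∈ range (N + 1), N.choose t * (c ^ t / β) := by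
        rw [sum_add_distrib, sum_ite_eq']
        gcongr
        · split_ifs <;> norm_num
        · exact Nat.le_succ N
    _ = 1 + (1 + c) ^ N / β := by
        rw [add_comm (1 : ℝ) c, add_pow, sum_div]
        congr 1
        exact sum_congr rfl fun t _ => by rw [one_pow]; ring

theorem pow_mul_prod_le {N : ℕ} {θ a b ρ : ℝ} (hθ : 0 ≤ θ) (ha0 : 0 ≤ a) (hb0 : 0 ≤ b)
    (ha : θ * a ≤ 1 / ρ) (hb : θ * b ≤ 1 / (ρ * N)) (d : ℕ) :
    θ ^ N * ∏ k ∈ range N, (a + ((k + d : ℕ) : ℝ) * b) ≤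
      (1 / ρ) ^ N * ∏ k ∈ range N, (1 + ((k + d : ℕ) : ℝ) / N) := by
  rw [pow_eq_prod_const, pow_eq_prod_const, ← prod_mul_distrib, ← prod_mul_distrib]
  refine prod_le_prod (fun k _ => by positivity) fun k _ => ?_
  calc θ * (a + ((k + d : ℕ) : ℝ) * b) = θ * a + ((k + d : ℕ) : ℝ) * (θ * b) := by ring
    _ ≤ 1 / ρ + ((k + d : ℕ) : ℝ) * (1 / (ρ * N)) := by gcongr
    _ = 1 / ρ * (1 + ((k + d : ℕ) : ℝ) / N) := by ring

theorem prod_range_le_pow_of_add_reflect_le {N : ℕ} {f : ℕ → ℝ} {c : ℝ} (hf : ∀ k, 0 ≤ f k)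
    (hc : 0 ≤ c) (h : ∀ k < N, f (N - 1 - k) + f k ≤ 2 * c) : ∏ k ∈ range N, f k ≤ c ^ N := by
  refine le_of_sq_le_sq ?_ (pow_nonneg hc N)
  calc (∏ k ∈ range N, f k) ^ 2 = ∏ k ∈ range N, f (N - 1 - k) * f k := by
        rw [prod_mul_distrib, prod_range_reflect, sq]
    _ ≤ ∏ k ∈ range N, c ^ 2 := by
        refine prod_le_prod (fun k _ => mul_nonneg (hf _) (hf _)) fun k hk => ?_
        nlinarith [h k (mem_range.1 hk), hf k, hf (N - 1 - k), sq_nonneg (f (N - 1 - k) - f k)]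
    _ = (c ^ N) ^ 2 := by rw [prod_const, card_range, pow_right_comm]

theorem reflect_add_div_le {N k d : ℕ} (hk : k < N) (hd : 2 * d ≤ N + 1) :
    (1 + ((N - 1 - k + d : ℕ) : ℝ) / N) + (1 + ((k + d : ℕ) : ℝ) / N) ≤ 2 * 2 := by
  have hN : (0 : ℝ) < N := by exact_mod_cast (Nat.zero_le k).trans_lt hk
  have hle : ((N - 1 - k + d : ℕ) : ℝ) + ((k + d : ℕ) : ℝ) ≤ 2 * N := by
    exact_mod_cast (by omega : N - 1 - k + d + (k + d) ≤ 2 * N)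
  have := (div_le_iff₀ hN).2 hle
  rw [add_div] at this
  linarith

theorem prod_one_add_succ_div_le (N : ℕ) :
    ∏ k ∈ range N, (1 + ((k + 1 : ℕ) : ℝ) / N) ≤ 2 ^ N :=
  prod_range_le_pow_of_add_reflect_le (fun _ => by positivity) zero_le_two fun _ hk =>
    reflect_add_div_le hk (by omega)

theorem prod_one_add_add_two_div_le (N : ℕ) :
    ∏ k ∈ range N, (1 + ((k + 2 : ℕ) : ℝ) / N) ≤ 2 ^ N + 1 := by
  rcases Nat.lt_or_ge N 3 with hN | hN
  · interval_cases N <;> norm_num [prod_range_succ]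
  · exact (prod_range_le_pow_of_add_reflect_le (fun _ => by positivity) zero_le_two fun _ hk =>
      reflect_add_div_le hk (by omega)).trans (le_add_of_nonneg_right zero_le_one)

end Numerics

open scoped BigOperators

section Repeats

variable {α β : Type*} [DecidableEq α] [DecidableEq β]

/-- The number of vertices of `A` that receive a label already seen, when the labels of `A` are
revealed one vertex at a time after those of `B`. -/
def repeats (z : α → β) (B A : Finset α) : ℕ :=
  #A + #(B.image z) - #((B ∪ A).image z)

theorem card_image_union_le (z : α → β) (B A : Finset α) :
    #((B ∪ A).image z) ≤ #A + #(B.image z) := by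
  rw [image_union, add_comm]
  exact (card_union_le _ _).trans (Nat.add_le_add_left card_image_le _)

theorem repeats_empty (z : α → β) (B : Finset α) : repeats z B ∅ = 0 := by
  simp [repeats]

theorem repeats_le_card (z : α → β) (B A : Finset α) : repeats z B A ≤ #A := by
  have : #(B.image z) ≤ #((B ∪ A).image z) := card_le_card (image_subset_image subset_union_left)
  unfold repeats
  omega

theorem repeats_insert (z : α → β) (B : Finset α) {A : Finset α} {x : α} (hx : x ∉ A) :
    repeats z B (insert x A) =
      repeats z B A + if z x ∈ (B ∪ A).image z then 1 else 0 := by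
  have := card_image_union_le z B A
  rw [repeats, repeats, union_insert, image_insert, card_insert_of_notMem hx, card_insert_eq_ite]
  split_ifs <;> omega

theorem repeats_update (z : α → β) {B A : Finset α} {x : α} (hx : x ∉ B ∪ A) (c : β) :
    repeats (Function.update z x c) B A = repeats z B A := by
  have himage : ∀ R ⊆ B ∪ A, R.image (Function.update z x c) = R.image z := fun R hR =>
    image_congr fun y hy => Function.update_of_ne (ne_of_mem_of_not_mem (hR hy) hx) _ _
  rw [repeats, repeats, himage _ subset_union_left, himage _ subset_rfl]

theorem card_filter_label_eq_le (z : α → β) {B : Finset α} (hB : B.Nonempty) (A : Finset α)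
    (c : β) : #{y ∈ B ∪ A | z y = c} ≤ repeats z B A + #B := by
  have himage : #((B ∪ A).image z) ≤ #{y ∈ B ∪ A | ¬z y = c} + 1 := by
    refine (card_le_card (t := insert c ({y ∈ B ∪ A | ¬z y = c}.image z)) ?_).trans
      ((card_insert_le _ _).trans (Nat.add_le_add_right card_image_le _))
    refine image_subset_iff.2 fun y hy => mem_insert.2 ?_
    exact (eq_or_ne (z y) c).imp_right fun h => mem_image_of_mem z (mem_filter.2 ⟨hy, h⟩)
  have hsplit := card_filter_add_card_filter_not (s := B ∪ A) (z · = c)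
  have hunion := card_union_le B A
  have hpos : 0 < #(B.image z) := (hB.image z).card_pos
  unfold repeats
  omega

end Repeats

section Resampling

variable {α β : Type*} [DecidableEq α]

/-- Whether a labeling belongs to `S` depends only on the labels of `B`: relabeling a vertex outside
`B` does not lead out of `S`. -/
def DeterminedOn (S : Finset (α → β)) (B : Finset α) : Prop :=
  ∀ z ∈ S, ∀ x ∉ B, ∀ c, Function.update z x c ∈ S

variable [Fintype β] {S : Finset (α → β)} {B : Finset α}

theorem DeterminedOn.expect_eq_expect_update (hS : DeterminedOn S B) {x : α} (hx : x ∉ B)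
    (H : (α → β) → ℝ) : 𝔼 z ∈ S, H z = 𝔼 z ∈ S, 𝔼 c, H (Function.update z x c) := by
  have hswap : 𝔼 p ∈ S ×ˢ univ, H (Function.update p.1 x p.2) =
      𝔼 p ∈ S ×ˢ (univ : Finset β), H p.1 := by
    refine expect_nbij' (fun p => (Function.update p.1 x p.2, p.1 x))
      (fun p => (Function.update p.1 x p.2, p.1 x)) ?_ ?_ ?_ ?_ ?_
    all_goals simp +contextual [hS _ _ _ hx]
  rw [← expect_product', hswap, expect_product]
  refine expect_congr rfl fun z _ => ?_
  have : Nonempty β := ⟨z x⟩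
  exact (expect_const univ_nonempty _).symm

variable [DecidableEq β]

theorem expect_ite_mem_le {a b : ℝ} (ha : 0 ≤ a) (T : Finset β) :
    𝔼 c, (if c ∈ T then b else a) ≤ a + (#T : ℝ) / Fintype.card β * b := by
  have hsum : ∑ c, (if c ∈ T then b else a) ≤ Fintype.card β * a + #T * b := by
    calc ∑ c, (if c ∈ T then b else a) ≤ ∑ c, (a + if c ∈ T then b else 0) :=
          sum_le_sum fun c _ => by split_ifs <;> linarith
      _ = Fintype.card β * a + #T * b := by
          rw [sum_add_distrib, sum_const, sum_ite_mem, univ_inter, sum_const, nsmul_eq_mul,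
            nsmul_eq_mul, card_univ]
  rcases isEmpty_or_nonempty β with h | h
  · simp [expect_eq_sum_div_card, ha]
  · rw [expect_eq_sum_div_card, card_univ, div_le_iff₀ (by exact_mod_cast Fintype.card_pos)]
    have : (Fintype.card β : ℝ) ≠ 0 := by exact_mod_cast Fintype.card_ne_zero
    calc _ ≤ _ := hsum
      _ = _ := by field_simp

theorem DeterminedOn.expect_pow_repeats_le (hS : DeterminedOn S B) {d : ℕ}
    (hd : ∀ z ∈ S, #(B.image z) ≤ d) {a b : ℝ} (ha : 0 ≤ a) (hb : 0 ≤ b) {A : Finset α}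
    (hA : Disjoint B A) :
    𝔼 z ∈ S, a ^ (#A - repeats z B A) * b ^ repeats z B A ≤
      ∏ k ∈ range #A, (a + ((k + d : ℕ) : ℝ) / Fintype.card β * b) := by
  induction A using Finset.induction_on with
  | empty =>
    simp only [repeats_empty, card_empty, pow_zero, mul_one, range_zero, prod_empty]
    exact S.eq_empty_or_nonempty.elim (fun h => by simp [h]) fun h => (expect_const h _).le
  | insert x A hx ih =>
    obtain ⟨hxB, hBA⟩ := disjoint_insert_right.1 hA
    have hx' : x ∉ B ∪ A := fun h => (mem_union.1 h).elim hxB hx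
    have hinsert : ∀ z : α → β, a ^ (#(insert x A) - repeats z B (insert x A)) *
        b ^ repeats z B (insert x A) = a ^ (#A - repeats z B A) * b ^ repeats z B A *
          if z x ∈ (B ∪ A).image z then b else a := by
      intro z
      rw [repeats_insert z B hx, card_insert_of_notMem hx]
      have := repeats_le_card z B A
      split_ifs
      · rw [Nat.add_sub_add_right, pow_succ, mul_assoc]
      · rw [add_zero, Nat.sub_add_comm this, pow_succ, mul_right_comm]
    have himage : ∀ (z : α → β) (c : β),
        (B ∪ A).image (Function.update z x c) = (B ∪ A).image z := fun z c =>
      image_congr fun y hy => Function.update_of_ne (ne_of_mem_of_not_mem hy hx') _ _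
    simp only [hinsert]
    rw [hS.expect_eq_expect_update hxB, card_insert_of_notMem hx, prod_range_succ]
    simp only [repeats_update _ hx', himage, Function.update_self, ← mul_expect]
    calc _ ≤ 𝔼 z ∈ S, a ^ (#A - repeats z B A) * b ^ repeats z B A *
          (a + ((#A + d : ℕ) : ℝ) / Fintype.card β * b) := by
          refine expect_le_expect fun z hz => ?_
          gcongr
          refine (expect_ite_mem_le ha _).trans ?_
          gcongr
          exact (card_image_union_le z B A).trans (Nat.add_le_add_left (hd z hz) _)
      _ ≤ _ := by
          rw [← expect_mul]
          exact mul_le_mul_of_nonneg_right (ih hBA) (by positivity)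

theorem DeterminedOn.expect_forall_eq (hS : DeterminedOn S B) (hne : S.Nonempty) {i : α}
    (hi : i ∈ B) {A : Finset α} (hA : Disjoint B A) :
    𝔼 z ∈ S, (if ∀ y ∈ A, z y = z i then (1 : ℝ) else 0) = ((Fintype.card β : ℝ)⁻¹) ^ #A := by
  induction A using Finset.induction_on with
  | empty => simpa using expect_const hne (1 : ℝ)
  | insert x A hx ih =>
    obtain ⟨hxB, hBA⟩ := disjoint_insert_right.1 hA
    have hxi : i ≠ x := ne_of_mem_of_not_mem hi hxB
    have hupdate : ∀ (z : α → β) (c : β), (∀ y ∈ insert x A, Function.update z x c y =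
        Function.update z x c i) ↔ c = z i ∧ ∀ y ∈ A, z y = z i := by
      intro z c
      rw [forall_mem_insert, Function.update_self, Function.update_of_ne hxi]
      refine and_congr_right fun _ => forall₂_congr fun y hy => ?_
      rw [Function.update_of_ne (ne_of_mem_of_not_mem hy hx)]
    rw [hS.expect_eq_expect_update hxB]
    rw [card_insert_of_notMem hx, pow_succ, ← ih hBA, expect_mul]
    refine expect_congr rfl fun z _ => ?_
    simp only [hupdate, ite_and]
    rw [expect_eq_sum_div_card, sum_ite_eq', if_pos (mem_univ _), card_univ, div_eq_mul_inv]

end Resampling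

section Edges

variable {n : ℕ}

/-- The pairs with both ends in `R`: the edges of the complete graph on `R`. -/
def slots (R : Finset (Fin n)) : Finset (Pairs n) :=
  (R ×ˢ R).subtype fun p => p.1 < p.2

theorem mem_slots {R : Finset (Fin n)} {p : Pairs n} :
    p ∈ slots R ↔ p.1.1 ∈ R ∧ p.1.2 ∈ R := by
  simp [slots]

@[to_additive]
theorem prod_slots_insert {M : Type*} [CommMonoid M] {f : Fin n → Fin n → M}
    (hf : ∀ a b, f a b = f b a) {R : Finset (Fin n)} {x : Fin n} (hx : x ∉ R) :
    ∏ p ∈ slots (insert x R), f p.1.1 p.1.2 =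
      (∏ p ∈ slots R, f p.1.1 p.1.2) * ∏ y ∈ R, f x y := by
  have hslots : ∀ T : Finset (Fin n), ∏ p ∈ slots T, f p.1.1 p.1.2 =
      ∏ a ∈ T, ∏ b ∈ T, if a < b then f a b else 1 := fun T => by
    rw [slots, prod_subtype_eq_prod_filter (fun p : Fin n × Fin n => f p.1 p.2), prod_filter,
      prod_product]
  have hmerge : ∀ y ∈ R, (if x < y then f x y else 1) * (if y < x then f y x else 1) = f x y := by
    intro y hy
    rcases lt_or_gt_of_ne (ne_of_mem_of_not_mem hy hx) with h | h
    · rw [if_neg h.not_gt, if_pos h, one_mul, hf]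
    · rw [if_pos h, if_neg h.not_gt, mul_one]
  simp only [hslots, prod_insert hx, lt_irrefl, if_false, one_mul]
  rw [prod_mul_distrib, ← mul_assoc, ← prod_mul_distrib, prod_congr rfl hmerge, mul_comm]

/-- The edges of the complete graph on `B ∪ A` with at least one end outside `B`. For `B = {i, j}`
they are the images of the edges of the clique minus an edge, `A` being the image of
`v₃, …, v_m`. -/
def linkEdges (B A : Finset (Fin n)) : Finset (Pairs n) :=
  slots (B ∪ A) \ slots B

theorem mem_linkEdges {B A : Finset (Fin n)} {p : Pairs n} :
    p ∈ linkEdges B A ↔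
      (p.1.1 ∈ B ∪ A ∧ p.1.2 ∈ B ∪ A) ∧ ¬(p.1.1 ∈ B ∧ p.1.2 ∈ B) := by
  rw [linkEdges, mem_sdiff, mem_slots, mem_slots]

theorem linkEdges_empty (B : Finset (Fin n)) : linkEdges B ∅ = ∅ := by
  rw [linkEdges, union_empty, sdiff_self, bot_eq_empty]

theorem linkEdges_inter (B A A' : Finset (Fin n)) :
    linkEdges B A ∩ linkEdges B A' = linkEdges B (A ∩ A') := by
  ext p
  simp only [mem_inter, mem_linkEdges, union_inter_distrib_left]
  tauto

@[to_additive]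
theorem prod_linkEdges_insert {M : Type*} [CommMonoid M] {f : Fin n → Fin n → M}
    (hf : ∀ a b, f a b = f b a) {B A : Finset (Fin n)} {x : Fin n} (hx : x ∉ B ∪ A) :
    ∏ p ∈ linkEdges B (insert x A), f p.1.1 p.1.2 =
      (∏ p ∈ linkEdges B A, f p.1.1 p.1.2) * ∏ y ∈ B ∪ A, f x y := by
  have hxB : x ∉ B := fun h => hx (mem_union_left A h)
  have hlink : ∀ T : Finset (Fin n), ∏ p ∈ linkEdges B T, f p.1.1 p.1.2 =
      ∏ p ∈ slots (B ∪ T), if p.1.1 ∈ B ∧ p.1.2 ∈ B then 1 else f p.1.1 p.1.2 := fun T => by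
    rw [linkEdges, sdiff_eq_filter, prod_filter]
    simp only [mem_slots, ite_not]
  rw [hlink, hlink, union_insert,
    prod_slots_insert (f := fun a b => if a ∈ B ∧ b ∈ B then 1 else f a b)
      (fun a b => by simp only [hf a b, and_comm]) hx]
  simp only [hxB, false_and, if_false]

theorem two_mul_card_linkEdges {B A : Finset (Fin n)} (hA : Disjoint B A) :
    2 * #(linkEdges B A) + #A = (#A + 2 * #B) * #A := by
  induction A using Finset.induction_on with
  | empty => simp [linkEdges_empty]
  | insert x A hx ih =>
    obtain ⟨hxB, hBA⟩ := disjoint_insert_right.1 hA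
    have hcard : #(linkEdges B (insert x A)) = #(linkEdges B A) + (#B + #A) := by
      rw [← card_union_of_disjoint hBA, card_eq_sum_ones, card_eq_sum_ones,
        card_eq_sum_ones (_ ∪ _)]
      exact sum_linkEdges_insert (f := fun _ _ => 1) (fun _ _ => rfl) (by simp [hxB, hx])
    rw [hcard, card_insert_of_notMem hx]
    linarith [ih hBA]

theorem two_mul_card_filter_linkEdges_add_repeats_le {β : Type*} [DecidableEq β] (z : Fin n → β)
    {B A : Finset (Fin n)} (hB : B.Nonempty) (hA : Disjoint B A) :
    2 * #{p ∈ linkEdges B A | z p.1.1 = z p.1.2} + repeats z B A ≤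
      (#A + 2 * #B) * repeats z B A := by
  induction A using Finset.induction_on with
  | empty => simp [linkEdges_empty, repeats_empty]
  | insert x A hx ih =>
    obtain ⟨hxB, hBA⟩ := disjoint_insert_right.1 hA
    have hmono : #{p ∈ linkEdges B (insert x A) | z p.1.1 = z p.1.2} =
        #{p ∈ linkEdges B A | z p.1.1 = z p.1.2} + #{y ∈ B ∪ A | z y = z x} := by
      simp only [card_filter, eq_comm (b := z x)]
      exact sum_linkEdges_insert (f := fun a b => if z a = z b then 1 else 0)
        (fun a b => by simp only [eq_comm]) (by simp [hxB, hx])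
    have ih := ih hBA
    rw [hmono, repeats_insert z B hx, card_insert_of_notMem hx]
    split_ifs with hseen
    · have := card_filter_label_eq_le z hB A (z x)
      have := repeats_le_card z B A
      nlinarith
    · have hnone : #{y ∈ B ∪ A | z y = z x} = 0 :=
        card_eq_zero.2 (filter_eq_empty_iff.2 fun y hy h => hseen (h ▸ mem_image_of_mem z hy))
      rw [hnone]
      nlinarith [Nat.zero_le (repeats z B A)]

theorem prod_linkEdges_map {m : ℕ} {M : Type*} [CommMonoid M] {f : Fin n → Fin n → M}
    (hf : ∀ a b, f a b = f b a) (π : Fin m ↪ Fin n) {B A : Finset (Fin m)} (hA : Disjoint B A) :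
    ∏ p ∈ linkEdges (B.map π) (A.map π), f p.1.1 p.1.2 =
      ∏ p ∈ linkEdges B A, f (π p.1.1) (π p.1.2) := by
  induction A using Finset.induction_on with
  | empty => simp only [map_empty, linkEdges_empty, prod_empty]
  | insert x A hx ih =>
    obtain ⟨hxB, hBA⟩ := disjoint_insert_right.1 hA
    rw [map_insert, prod_linkEdges_insert hf (by simp [hxB, hx]),
      prod_linkEdges_insert (f := fun a b => f (π a) (π b)) (fun a b => hf _ _) (by simp [hxB, hx]),
      ih hBA, ← map_union, prod_map]

end Edges

section CliqueStatistic

theorem cliqueEdges_eq_map_linkEdges (N : ℕ) :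
    cliqueEdges (N + 2) (Nat.le_add_left 2 N) =
      (linkEdges {0, 1} {0, 1}ᶜ).map (Function.Embedding.subtype _) := by
  ext ⟨a, b⟩
  have hpair : a < b → ((a = 0 ∨ a = 1) ∧ (b = 0 ∨ b = 1) ↔ a = 0 ∧ b = 1) := by
    simp only [Fin.lt_def, Fin.ext_iff, Fin.val_zero, Fin.val_one]
    omega
  simp only [cliqueEdges, mem_filter, mem_univ, true_and, mem_map, mem_linkEdges, union_compl,
    mem_insert, mem_singleton, Function.Embedding.subtype_apply, Subtype.exists]
  constructor
  · rintro ⟨hlt, hne⟩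
    exact ⟨(a, b), hlt, fun h => hne ((hpair hlt).1 h), rfl⟩
  · rintro ⟨_, hlt, hne, rfl⟩
    exact ⟨hlt, fun h => hne ((hpair hlt).2 h)⟩

theorem Ymat_comm {n : ℕ} (q : ℝ) (y : EdgeConf n) (a b : Fin n) :
    Ymat n q y a b = Ymat n q y b a := by
  simp only [Ymat, eq_comm (a := a), min_comm a, max_comm a]

/-- The monomial `∏ Y_e` over a set of edges. -/
def edgeProd {n : ℕ} (q : ℝ) (E : Finset (Pairs n)) (y : EdgeConf n) : ℝ :=
  ∏ p ∈ E, Ymat n q y p.1.1 p.1.2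

theorem prod_cliqueEdges_Ymat {n N : ℕ} (q : ℝ) (y : EdgeConf n) (π : Fin (N + 2) ↪ Fin n) :
    ∏ p ∈ cliqueEdges (N + 2) (Nat.le_add_left 2 N), Ymat n q y (π p.1) (π p.2) =
      edgeProd q (linkEdges {π 0, π 1} (({0, 1}ᶜ : Finset (Fin (N + 2))).map π)) y := by
  rw [cliqueEdges_eq_map_linkEdges, prod_map, edgeProd]
  have := prod_linkEdges_map (Ymat_comm q y) π
    (disjoint_compl_right : Disjoint ({0, 1} : Finset (Fin (N + 2))) _)
  rw [map_insert, map_singleton] at this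
  exact this.symm

theorem compl_zero_one_eq_map_succ_succ (N : ℕ) :
    ({0, 1}ᶜ : Finset (Fin (N + 2))) =
      univ.map ((Fin.succEmb N).trans (Fin.succEmb (N + 1))) := by
  ext v
  refine Fin.cases ?_ (Fin.cases ?_ fun k => ?_) v <;> simp [Fin.ext_iff]

theorem card_filter_map_compl_eq {α : Type*} [Fintype α] [DecidableEq α] {i j : α} (hij : i ≠ j)
    {A : Finset α} (hA : Disjoint {i, j} A) {N : ℕ} (hN : #A = N) :
    #{π : Fin (N + 2) ↪ α | (π 0 = i ∧ π 1 = j) ∧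
      ({0, 1}ᶜ : Finset (Fin (N + 2))).map π = A} = N.factorial := by
  have hcard : #(univ : Finset (Fin N ↪ A)) = N.factorial := by
    rw [card_univ, Fintype.card_embedding_eq, Fintype.card_fin, Fintype.card_coe, hN,
      Nat.descFactorial_self]
  rw [← hcard, compl_zero_one_eq_map_succ_succ]
  refine card_bij (fun π hπ => ⟨fun k => ⟨π k.succ.succ, ?_⟩, fun k l h => ?_⟩) ?_ ?_ ?_
  · rw [← (mem_filter.1 hπ).2.2]
    exact mem_map_of_mem π (mem_map_of_mem _ (mem_univ k))
  · simpa using h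
  · exact fun _ _ => mem_univ _
  · intro π hπ π' hπ' h
    obtain ⟨⟨h0, h1⟩, -⟩ := (mem_filter.1 hπ).2
    obtain ⟨⟨h0', h1'⟩, -⟩ := (mem_filter.1 hπ').2
    ext v
    refine Fin.cases (h0.trans h0'.symm) (Fin.cases (h1.trans h1'.symm) fun k => ?_) v
    exact congrArg Subtype.val (DFunLike.congr_fun h k)
  · intro e _
    have hne : ∀ x ∈ ({i, j} : Finset α), ∀ k, (e k : α) ≠ x := fun x hx k h =>
      disjoint_left.1 hA hx (h ▸ (e k).2)
    have hinj : Function.Injective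
        (Fin.cons i (Fin.cons j fun k => (e k : α)) : Fin (N + 2) → α) := by
      simp only [Fin.cons_injective_iff, Fin.range_cons, Set.mem_insert_iff, Set.mem_range, not_or,
        not_exists]
      exact ⟨⟨hij, hne i (by simp)⟩, hne j (by simp), Subtype.val_injective.comp e.injective⟩
    refine ⟨⟨_, hinj⟩, mem_filter.2 ⟨mem_univ _, ⟨rfl, rfl⟩, ?_⟩, rfl⟩
    refine eq_of_subset_of_card_le (fun x hx => ?_) ?_
    · rw [map_map] at hx
      obtain ⟨k, -, rfl⟩ := mem_map.1 hx
      exact (e k).2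
    · rw [card_map, card_map, card_univ, Fintype.card_fin, hN]

theorem cliqueStat_eq {n : ℕ} (N : ℕ) (q : ℝ) {i j : Fin n} (hij : i ≠ j) (y : EdgeConf n) :
    cliqueStat n q (N + 2) (Nat.le_add_left 2 N) i j y =
      N.factorial * ∑ A ∈ powersetCard N {i, j}ᶜ, edgeProd q (linkEdges {i, j} A) y := by
  have hmaps : ∀ π : Fin (N + 2) ↪ Fin n, π 0 = i ∧ π 1 = j →
      ({0, 1}ᶜ : Finset (Fin (N + 2))).map π ∈ powersetCard N ({i, j}ᶜ : Finset (Fin n)) := by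
    rintro π ⟨rfl, rfl⟩
    rw [mem_powersetCard, card_map, card_compl, Fintype.card_fin, card_pair (by simp)]
    refine ⟨?_, by omega⟩
    have := (disjoint_map π).2 (disjoint_compl_right (a := ({0, 1} : Finset (Fin (N + 2)))))
    rwa [map_insert, map_singleton, ← subset_compl_iff_disjoint_left] at this
  calc cliqueStat n q (N + 2) (Nat.le_add_left 2 N) i j y
      = ∑ π : Fin (N + 2) ↪ Fin n with π 0 = i ∧ π 1 = j,
          edgeProd q (linkEdges {i, j} (({0, 1}ᶜ : Finset (Fin (N + 2))).map π)) y := by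
        simp only [cliqueStat, cliqueStatOn, mem_univ, implies_true, and_true, sum_filter,
          prod_cliqueEdges_Ymat]
        refine sum_congr rfl fun π _ => ?_
        exact ite_congr rfl (fun h => by obtain ⟨rfl, rfl⟩ := h; rfl) fun _ => rfl
    _ = ∑ A ∈ powersetCard N {i, j}ᶜ, N.factorial * edgeProd q (linkEdges {i, j} A) y := by
        rw [← sum_fiberwise_of_maps_to (fun π hπ => hmaps π (mem_filter.1 hπ).2)]
        refine sum_congr rfl fun A hA => ?_
        obtain ⟨hdisj, hcard⟩ := mem_powersetCard.1 hA
        rw [← card_filter_map_compl_eq hij (subset_compl_iff_disjoint_left.1 hdisj) hcard,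
          filter_filter, ← nsmul_eq_mul]
        refine sum_eq_card_nsmul fun π hπ => ?_
        rw [(mem_filter.1 hπ).2.2]
    _ = _ := (mul_sum _ _ _).symm

end CliqueStatistic

section EdgeMoments

/-- The paper's `p̄`: the second moment of `Y_e` for an edge `e` inside a community. -/
def pbar (q lam : ℝ) : ℝ :=
  q * (1 - q) + lam * (1 - 2 * q)

variable {n K : ℕ}

/-- Expectation over the edges, conditionally on the labels `z`. -/
def edgeExpec (q lam : ℝ) (z : Lab n K) (F : EdgeConf n → ℝ) : ℝ :=
  ∑ y : EdgeConf n,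
    (∏ p : Pairs n, if y p then pEdge n K q lam z p else 1 - pEdge n K q lam z p) * F y

theorem edgeExpec_prod (q lam : ℝ) (z : Lab n K) (h : Pairs n → Bool → ℝ) :
    edgeExpec q lam z (fun y => ∏ p, h p (y p)) =
      ∏ p, (pEdge n K q lam z p * h p true + (1 - pEdge n K q lam z p) * h p false) := by
  calc edgeExpec q lam z (fun y => ∏ p, h p (y p))
      = ∏ p, ∑ b : Bool, (if b then pEdge n K q lam z p else 1 - pEdge n K q lam z p) * h p b := by
        simp only [edgeExpec, ← prod_mul_distrib, prod_univ_sum, Fintype.piFinset_univ]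
    _ = _ := prod_congr rfl fun p _ => by
        rw [Fintype.sum_bool, if_pos rfl, if_neg Bool.false_ne_true]

theorem edgeExpec_one (q lam : ℝ) (z : Lab n K) : edgeExpec q lam z (fun _ => 1) = 1 := by
  simpa using edgeExpec_prod q lam z fun _ _ => 1

theorem edgeExpec_mul_sum {ι : Type*} (q lam : ℝ) (z : Lab n K) (c : ℝ) (s : Finset ι)
    (F : ι → EdgeConf n → ℝ) :
    edgeExpec q lam z (fun y => c * ∑ a ∈ s, F a y) = c * ∑ a ∈ s, edgeExpec q lam z (F a) := by
  simp only [edgeExpec, mul_sum]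
  rw [sum_comm]
  exact sum_congr rfl fun _ _ => sum_congr rfl fun _ _ => mul_left_comm _ _ _

theorem Ymat_pair (q : ℝ) (y : EdgeConf n) (p : Pairs n) :
    Ymat n q y p.1.1 p.1.2 = (if y p then 1 else 0) - q := by
  simp [Ymat, p.2.ne, min_eq_left p.2.le, max_eq_right p.2.le]

theorem edgeExpec_edgeProd_mul (q lam : ℝ) (z : Lab n K) (E E' : Finset (Pairs n)) :
    edgeExpec q lam z (fun y => edgeProd q E y * edgeProd q E' y) =
      (∏ p ∈ E ∩ E', if z p.1.1 = z p.1.2 then pbar q lam else q * (1 - q)) *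
        ∏ p ∈ symmDiff E E', if z p.1.1 = z p.1.2 then lam else 0 := by
  have hunivProd : ∀ (T : Finset (Pairs n)) (g : Pairs n → ℝ),
      ∏ p ∈ T, g p = ∏ p, if p ∈ T then g p else 1 := fun T g => by
    rw [prod_ite_mem, univ_inter]
  have hsplit : (fun y => edgeProd q E y * edgeProd q E' y) = fun y : EdgeConf n =>
      ∏ p, (if p ∈ E then (if y p then 1 else 0) - q else 1) *
        if p ∈ E' then (if y p then 1 else 0) - q else 1 := by
    funext y
    simp only [edgeProd, Ymat_pair]
    rw [hunivProd E, hunivProd E', prod_mul_distrib]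
  rw [hsplit, hunivProd (E ∩ E'), hunivProd (symmDiff E E'), ← prod_mul_distrib]
  rw [edgeExpec_prod q lam z fun p b => (if p ∈ E then (if b then 1 else 0) - q else 1) *
    if p ∈ E' then (if b then 1 else 0) - q else 1]
  refine prod_congr rfl fun p _ => ?_
  by_cases hE : p ∈ E <;> by_cases hE' : p ∈ E' <;> by_cases hz : z p.1.1 = z p.1.2 <;>
    simp only [pEdge, pbar, mem_inter, mem_symmDiff, hE, hE', hz, if_true, if_false, and_self,
      and_true, and_false, not_true, not_false_eq_true, or_self, or_false, or_true,
      Bool.false_eq_true] <;> ring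

theorem label_eq_of_forall_sdiff {B A A' : Finset (Fin n)} {z : Lab n K}
    (h : ∀ p ∈ linkEdges B A \ linkEdges B A', z p.1.1 = z p.1.2) {a : Fin n} (haA : a ∈ A)
    (ha : a ∉ B ∪ A') {x : Fin n} (hx : x ∈ B ∪ A) : z x = z a := by
  have haB : a ∉ B := fun h => ha (mem_union_left A' h)
  have haBA : a ∈ B ∪ A := mem_union_right B haA
  rcases lt_trichotomy x a with hlt | rfl | hlt
  · exact h ⟨(x, a), hlt⟩ (by simp only [mem_sdiff, mem_linkEdges]; tauto)
  · rfl
  · exact (h ⟨(a, x), hlt⟩ (by simp only [mem_sdiff, mem_linkEdges]; tauto)).symm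

theorem label_eq_of_forall_symmDiff {B A A' : Finset (Fin n)} {z : Lab n K}
    (h : ∀ p ∈ symmDiff (linkEdges B A) (linkEdges B A'), z p.1.1 = z p.1.2)
    (hA : Disjoint B A) (hsub : ¬A ⊆ A') {i : Fin n} (hi : i ∈ B) :
    ∀ x ∈ B ∪ (A ∪ A'), z x = z i := by
  obtain ⟨a, haA, haA'⟩ := not_subset.1 hsub
  have hlink : ∀ x ∈ B ∪ A, z x = z i := fun x hx => by
    have hsdiff := fun p hp => h p (mem_union_left _ hp)
    have ha : a ∉ B ∪ A' := notMem_union.2 ⟨disjoint_right.1 hA haA, haA'⟩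
    rw [label_eq_of_forall_sdiff hsdiff haA ha hx,
      label_eq_of_forall_sdiff hsdiff haA ha (mem_union_left A hi)]
  intro x hx
  by_cases hxBA : x ∈ B ∪ A
  · exact hlink x hxBA
  · have hxA' : x ∈ A' := by
      rw [← union_assoc] at hx
      exact (mem_union.1 hx).resolve_left hxBA
    exact (label_eq_of_forall_sdiff (fun p hp => h p (mem_union_right _ hp)) hxA' hxBA
      (mem_union_left A' hi)).symm

theorem edgeExpec_linkEdges_of_not_subset (q lam : ℝ) (z : Lab n K) {B A A' : Finset (Fin n)}
    (hA : Disjoint B A) (hsub : ¬A ⊆ A') {i : Fin n} (hi : i ∈ B) :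
    edgeExpec q lam z
        (fun y => edgeProd q (linkEdges B A) y * edgeProd q (linkEdges B A') y) =
      pbar q lam ^ #(linkEdges B (A ∩ A')) *
        lam ^ #(symmDiff (linkEdges B A) (linkEdges B A')) *
        if ∀ x ∈ B ∪ (A ∪ A'), z x = z i then 1 else 0 := by
  rw [edgeExpec_edgeProd_mul, linkEdges_inter]
  split_ifs with hconst
  · have hmono : ∀ p : Pairs n, p ∈ linkEdges B A ∨ p ∈ linkEdges B A' → z p.1.1 = z p.1.2 := by
      intro p hp
      have hends : p.1.1 ∈ B ∪ (A ∪ A') ∧ p.1.2 ∈ B ∪ (A ∪ A') := by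
        simp only [mem_linkEdges, mem_union] at hp ⊢
        tauto
      rw [hconst _ hends.1, hconst _ hends.2]
    rw [mul_one]
    congr 1
    · refine prod_eq_pow_card fun p hp => if_pos (hmono p (Or.inl ?_))
      exact mem_of_mem_inter_left (linkEdges_inter B A A' ▸ hp)
    · exact prod_eq_pow_card fun p hp =>
        if_pos (hmono p ((mem_symmDiff.1 hp).imp And.left And.left))
  · obtain ⟨p, hp, hz⟩ : ∃ p ∈ symmDiff (linkEdges B A) (linkEdges B A'), z p.1.1 ≠ z p.1.2 := by
      contrapose! hconst
      exact label_eq_of_forall_symmDiff hconst hA hsub hi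
    rw [mul_zero, prod_eq_zero hp (if_neg hz), mul_zero]

end EdgeMoments

section LabelMoments

variable {n K : ℕ}

theorem expec_eq_sum_edgeExpec (q lam : ℝ) (F : Lab n K → EdgeConf n → ℝ) :
    expec n K q lam F = ((K : ℝ)⁻¹) ^ n * ∑ z, edgeExpec q lam z (F z) := by
  simp only [expec, wt, edgeExpec, mul_assoc, mul_sum]

theorem expec_ite_div_expec_ite (hK : K ≠ 0) (q lam : ℝ) (P : Lab n K → Prop) [DecidablePred P]
    (F : EdgeConf n → ℝ) :
    expec n K q lam (fun z y => if P z then F y else 0) /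
        expec n K q lam (fun z _ => if P z then 1 else 0) =
      𝔼 z with P z, edgeExpec q lam z F := by
  have hite : ∀ G : EdgeConf n → ℝ, expec n K q lam (fun z y => if P z then G y else 0) =
      ((K : ℝ)⁻¹) ^ n * ∑ z with P z, edgeExpec q lam z G := fun G => by
    rw [expec_eq_sum_edgeExpec, sum_filter]
    congr 1
    exact sum_congr rfl fun z _ => by split_ifs <;> simp [edgeExpec]
  have hK0 : ((K : ℝ)⁻¹) ^ n ≠ 0 := pow_ne_zero n (inv_ne_zero (Nat.cast_ne_zero.2 hK))
  rw [hite F, hite fun _ => 1, mul_div_mul_left _ _ hK0, expect_eq_sum_div_card]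
  simp only [edgeExpec_one, sum_const, nsmul_one]

/-- The labelings for which `i` and `j` lie in the same community. -/
def labelsEq (K : ℕ) (i j : Fin n) : Finset (Lab n K) :=
  {z | z i = z j}

/-- The labelings for which `i` and `j` lie in different communities. -/
def labelsNe (K : ℕ) (i j : Fin n) : Finset (Lab n K) :=
  {z | z i ≠ z j}

theorem determinedOn_labelsEq (K : ℕ) (i j : Fin n) : DeterminedOn (labelsEq K i j) {i, j} := by
  intro z hz x hx c
  simp only [mem_insert, mem_singleton, not_or] at hx
  simpa [labelsEq, Function.update_of_ne (Ne.symm hx.1), Function.update_of_ne (Ne.symm hx.2)]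
    using hz

theorem determinedOn_labelsNe (K : ℕ) (i j : Fin n) : DeterminedOn (labelsNe K i j) {i, j} := by
  intro z hz x hx c
  simp only [mem_insert, mem_singleton, not_or] at hx
  simpa [labelsNe, Function.update_of_ne (Ne.symm hx.1), Function.update_of_ne (Ne.symm hx.2)]
    using hz

theorem labelsEq_nonempty (hK : K ≠ 0) (i j : Fin n) : (labelsEq K i j).Nonempty :=
  ⟨fun _ => ⟨0, Nat.pos_of_ne_zero hK⟩, by simp [labelsEq]⟩

theorem expecEq_eq_expect (hK : K ≠ 0) (q lam : ℝ) (i j : Fin n) (F : EdgeConf n → ℝ) :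
    expecEq n K q lam i j (fun _ y => F y) = 𝔼 z ∈ labelsEq K i j, edgeExpec q lam z F :=
  expec_ite_div_expec_ite hK q lam _ F

theorem expecNe_eq_expect (hK : K ≠ 0) (q lam : ℝ) (i j : Fin n) (F : EdgeConf n → ℝ) :
    expecNe n K q lam i j (fun _ y => F y) = 𝔼 z ∈ labelsNe K i j, edgeExpec q lam z F :=
  expec_ite_div_expec_ite hK q lam _ F

/-- The mean, over a labeling drawn uniformly from `S` and the edges, of the product of the
monomials that link `A` and `A'` to `B`. -/
def mixedMoment (q lam : ℝ) (S : Finset (Lab n K)) (B A A' : Finset (Fin n)) : ℝ :=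
  𝔼 z ∈ S, edgeExpec q lam z fun y =>
    edgeProd q (linkEdges B A) y * edgeProd q (linkEdges B A') y

theorem expect_edgeExpec_cliqueStat (N : ℕ) (q lam : ℝ) (S : Finset (Lab n K)) {i j : Fin n}
    (hij : i ≠ j) :
    𝔼 z ∈ S, edgeExpec q lam z (cliqueStat n q (N + 2) (Nat.le_add_left 2 N) i j) =
      N.factorial * ∑ A ∈ powersetCard N {i, j}ᶜ, mixedMoment q lam S {i, j} A ∅ := by
  simp only [funext (cliqueStat_eq N q hij), edgeExpec_mul_sum, mixedMoment, linkEdges_empty,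
    edgeProd, prod_empty, mul_one]
  rw [← mul_expect, expect_sum_comm]

theorem expect_edgeExpec_cliqueStat_sq (N : ℕ) (q lam : ℝ) (S : Finset (Lab n K)) {i j : Fin n}
    (hij : i ≠ j) :
    𝔼 z ∈ S, edgeExpec q lam z
        (fun y => cliqueStat n q (N + 2) (Nat.le_add_left 2 N) i j y ^ 2) =
      (N.factorial : ℝ) ^ 2 * ∑ A ∈ powersetCard N {i, j}ᶜ, ∑ A' ∈ powersetCard N {i, j}ᶜ,
        mixedMoment q lam S {i, j} A A' := by
  simp only [cliqueStat_eq N q hij, mul_pow, sq (∑ _ ∈ _, _), sum_mul_sum, ← sum_product',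
    edgeExpec_mul_sum, mixedMoment]
  rw [← mul_expect, expect_sum_comm]

theorem mixedMoment_labelsNe_of_not_subset (q lam : ℝ) {i j : Fin n} {A A' : Finset (Fin n)}
    (hA : Disjoint {i, j} A) (hsub : ¬A ⊆ A') :
    mixedMoment q lam (labelsNe K i j) {i, j} A A' = 0 := by
  refine expect_eq_zero fun z hz => ?_
  rw [edgeExpec_linkEdges_of_not_subset q lam z hA hsub (mem_insert_self i _), if_neg, mul_zero]
  exact fun hconst => (mem_filter.1 hz).2 (hconst j (by simp)).symm

theorem mixedMoment_labelsEq_of_not_subset (hK : K ≠ 0) (q lam : ℝ) {i j : Fin n}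
    {A A' : Finset (Fin n)} (hA : Disjoint {i, j} A) (hA' : Disjoint {i, j} A') (hsub : ¬A ⊆ A') :
    mixedMoment q lam (labelsEq K i j) {i, j} A A' =
      pbar q lam ^ #(linkEdges {i, j} (A ∩ A')) *
        lam ^ #(symmDiff (linkEdges {i, j} A) (linkEdges {i, j} A')) *
        ((K : ℝ)⁻¹) ^ #(A ∪ A') := by
  have hmoment : ∀ z ∈ labelsEq K i j,
      edgeExpec q lam z
          (fun y => edgeProd q (linkEdges {i, j} A) y * edgeProd q (linkEdges {i, j} A') y) =
        pbar q lam ^ #(linkEdges {i, j} (A ∩ A')) *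
          lam ^ #(symmDiff (linkEdges {i, j} A) (linkEdges {i, j} A')) *
          if ∀ x ∈ A ∪ A', z x = z i then 1 else 0 := fun z hz => by
    have hzij : z i = z j := (mem_filter.1 hz).2
    rw [edgeExpec_linkEdges_of_not_subset q lam z hA hsub (mem_insert_self i _)]
    simp only [mem_union, mem_insert, mem_singleton, or_imp, forall_and, forall_eq, hzij, true_and]
  have hprob := (determinedOn_labelsEq K i j).expect_forall_eq (labelsEq_nonempty hK i j)
    (mem_insert_self i _) (disjoint_union_right.2 ⟨hA, hA'⟩)
  rw [Fintype.card_fin] at hprob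
  rw [mixedMoment, expect_congr rfl hmoment, ← mul_expect, ← hprob]
  congr!

end LabelMoments

section MomentBounds

/-- The noise-to-signal ratio `√(q̄ + λ) / λ` of an edge inside a community. -/
def withinNoise (q lam : ℝ) : ℝ :=
  √(q * (1 - q) + lam) / lam

/-- The noise-to-signal ratio `√q̄ / λ` of an edge between two communities. -/
def acrossNoise (q lam : ℝ) : ℝ :=
  √(q * (1 - q)) / lam

section Noise

variable {q lam : ℝ}

theorem pbar_nonneg (hq : 0 ≤ q) (hlam : 0 ≤ lam) (hql : q + lam ≤ 1) : 0 ≤ pbar q lam := by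
  have hpbar : pbar q lam = (q + lam) * (1 - (q + lam)) + lam ^ 2 := by
    rw [pbar]
    ring
  rw [hpbar]
  exact add_nonneg (mul_nonneg (add_nonneg hq hlam) (sub_nonneg.2 hql)) (sq_nonneg lam)

theorem mul_one_sub_nonneg (hq : 0 ≤ q) (hlam : 0 ≤ lam) (hql : q + lam ≤ 1) :
    0 ≤ q * (1 - q) :=
  mul_nonneg hq (by linarith)

theorem sq_mul_acrossNoise (hq : 0 ≤ q * (1 - q)) (hlam : lam ≠ 0) :
    (lam * acrossNoise q lam) ^ 2 = q * (1 - q) := by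
  rw [acrossNoise, mul_div_cancel₀ _ hlam, Real.sq_sqrt hq]

theorem sq_mul_withinNoise (hq : 0 ≤ q * (1 - q)) (hlam : 0 < lam) :
    (lam * withinNoise q lam) ^ 2 = q * (1 - q) + lam := by
  rw [withinNoise, mul_div_cancel₀ _ hlam.ne', Real.sq_sqrt (add_nonneg hq hlam.le)]

theorem pbar_le_sq_mul_withinNoise (hq : 0 ≤ q) (hlam : 0 < lam) (hql : q + lam ≤ 1) :
    pbar q lam ≤ (lam * withinNoise q lam) ^ 2 := by
  rw [sq_mul_withinNoise (mul_one_sub_nonneg hq hlam.le hql) hlam, pbar]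
  linarith [mul_nonneg hlam.le hq]

theorem acrossNoise_nonneg (q : ℝ) (hlam : 0 ≤ lam) : 0 ≤ acrossNoise q lam :=
  div_nonneg (Real.sqrt_nonneg _) hlam

theorem acrossNoise_le_withinNoise (q : ℝ) (hlam : 0 ≤ lam) :
    acrossNoise q lam ≤ withinNoise q lam := by
  unfold acrossNoise withinNoise
  gcongr
  exact le_add_of_nonneg_right hlam

theorem one_le_withinNoise (hq : 0 ≤ q) (hlam : 0 < lam) (hql : q + lam ≤ 1) :
    1 ≤ withinNoise q lam := by
  rw [withinNoise, one_le_div hlam]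
  refine Real.le_sqrt_of_sq_le ?_
  nlinarith [mul_one_sub_nonneg hq hlam.le hql]

end Noise

theorem pow_mul_pow_sub_le {x y : ℝ} (hy : 0 ≤ y) (hyx : y ≤ x) {u w v : ℕ} (huw : u ≤ w)
    (hwv : w ≤ v) : x ^ u * y ^ (v - u) ≤ x ^ w * y ^ (v - w) := by
  have hx : 0 ≤ x := hy.trans hyx
  calc x ^ u * y ^ (v - u) = x ^ u * y ^ (w - u) * y ^ (v - w) := by
        rw [mul_assoc, ← pow_add, add_comm, tsub_add_tsub_cancel hwv huw]
    _ ≤ x ^ u * x ^ (w - u) * y ^ (v - w) := by gcongr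
    _ = x ^ w * y ^ (v - w) := by rw [← pow_add, Nat.add_sub_cancel' huw]

variable {n K : ℕ} {q lam : ℝ}

theorem edgeExpec_edgeProd_linkEdges_mul_self_le (hq : 0 ≤ q) (hlam : 0 < lam)
    (hql : q + lam ≤ 1) (z : Lab n K) {B A : Finset (Fin n)} {b : ℕ} (hb : 2 * #B = b + 1)
    (hA : Disjoint B A) :
    edgeExpec q lam z
        (fun y => edgeProd q (linkEdges B A) y * edgeProd q (linkEdges B A) y) ≤
      ((lam * acrossNoise q lam) ^ (#A + b)) ^ (#A - repeats z B A) *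
        ((lam * withinNoise q lam) ^ (#A + b)) ^ repeats z B A := by
  set E := linkEdges B A
  set x := lam * withinNoise q lam
  set y := lam * acrossNoise q lam
  have hy : 0 ≤ y := mul_nonneg hlam.le (acrossNoise_nonneg q hlam.le)
  have hyx : y ≤ x :=
    mul_le_mul_of_nonneg_left (acrossNoise_le_withinNoise q hlam.le) hlam.le
  have hEcard : 2 * #E = (#A + b) * #A := by
    have := two_mul_card_linkEdges hA
    rw [hb] at this
    linarith
  have hmono : 2 * #{p ∈ E | z p.1.1 = z p.1.2} ≤ (#A + b) * repeats z B A := by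
    have hB : B.Nonempty := card_pos.1 (by omega)
    have := two_mul_card_filter_linkEdges_add_repeats_le z hB hA
    rw [hb] at this
    linarith
  calc _ = pbar q lam ^ #{p ∈ E | z p.1.1 = z p.1.2} *
        (q * (1 - q)) ^ #{p ∈ E | ¬z p.1.1 = z p.1.2} := by
        rw [edgeExpec_edgeProd_mul, inter_self, symmDiff_self, bot_eq_empty, prod_empty, mul_one,
          prod_ite, prod_const, prod_const]
    _ ≤ (x ^ 2) ^ #{p ∈ E | z p.1.1 = z p.1.2} *
        (y ^ 2) ^ #{p ∈ E | ¬z p.1.1 = z p.1.2} := by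
        rw [sq_mul_acrossNoise (mul_one_sub_nonneg hq hlam.le hql) hlam.ne']
        have := pbar_nonneg hq hlam.le hql
        have := mul_one_sub_nonneg hq hlam.le hql
        gcongr
        exact pbar_le_sq_mul_withinNoise hq hlam hql
    _ = x ^ (2 * #{p ∈ E | z p.1.1 = z p.1.2}) *
        y ^ ((#A + b) * #A - 2 * #{p ∈ E | z p.1.1 = z p.1.2}) := by
        rw [← pow_mul, ← pow_mul, ← hEcard, ← Nat.mul_sub,
          ← card_filter_add_card_filter_not (s := E) fun p => z p.1.1 = z p.1.2,
          Nat.add_sub_cancel_left]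
    _ ≤ x ^ ((#A + b) * repeats z B A) * y ^ ((#A + b) * #A - (#A + b) * repeats z B A) :=
        pow_mul_pow_sub_le hy hyx hmono (Nat.mul_le_mul_left _ (repeats_le_card z B A))
    _ = _ := by rw [← Nat.mul_sub, pow_mul, pow_mul, mul_comm]

theorem DeterminedOn.mixedMoment_self_le {B : Finset (Fin n)} {S : Finset (Lab n K)}
    (hS : DeterminedOn S B) {d : ℕ} (hd : ∀ z ∈ S, #(B.image z) ≤ d) (hq : 0 ≤ q)
    (hlam : 0 < lam) (hql : q + lam ≤ 1) {A : Finset (Fin n)} {b : ℕ} (hb : 2 * #B = b + 1)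
    (hA : Disjoint B A) :
    mixedMoment q lam S B A A ≤
      ∏ k ∈ range #A, ((lam * acrossNoise q lam) ^ (#A + b) +
        ((k + d : ℕ) : ℝ) / K * (lam * withinNoise q lam) ^ (#A + b)) := by
  have hacross := mul_nonneg hlam.le (acrossNoise_nonneg q hlam.le)
  have hwithin := mul_nonneg hlam.le (zero_le_one.trans (one_le_withinNoise hq hlam hql))
  refine (expect_le_expect fun z _ =>
    edgeExpec_edgeProd_linkEdges_mul_self_le hq hlam hql z hb hA).trans ?_
  simpa only [Fintype.card_fin] using
    hS.expect_pow_repeats_le hd (pow_nonneg hacross _) (pow_nonneg hwithin _) hA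

/-- The mean of the monomial that links `N` vertices to `i` and `j`, given `z i = z j`. -/
def monomialMean (K N : ℕ) (lam : ℝ) : ℝ :=
  (√lam ^ (N + 3) / K) ^ N

theorem sq_monomialMean (K N : ℕ) (hlam : 0 ≤ lam) :
    monomialMean K N lam ^ 2 = (lam ^ (N + 3) / (K : ℝ) ^ 2) ^ N := by
  rw [monomialMean, pow_right_comm, div_pow, pow_right_comm, Real.sq_sqrt hlam]

variable {i j : Fin n} {N : ℕ} {A A' : Finset (Fin n)}

theorem two_mul_card_linkEdges_pair (hij : i ≠ j) (hA : Disjoint {i, j} A) :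
    2 * #(linkEdges {i, j} A) = #A * (#A + 3) := by
  have := two_mul_card_linkEdges hA
  rw [card_pair hij] at this
  linarith

theorem mixedMoment_labelsEq_empty (hK : K ≠ 0) (hN : N ≠ 0) (q : ℝ) (hlam : 0 ≤ lam)
    (hij : i ≠ j) (hA : Disjoint {i, j} A) (hcard : #A = N) :
    mixedMoment q lam (labelsEq K i j) {i, j} A ∅ = monomialMean K N lam := by
  have hsub : ¬A ⊆ ∅ := fun h => hN (by rw [← hcard, subset_empty.1 h, card_empty])
  have hE := two_mul_card_linkEdges_pair hij hA
  rw [mixedMoment_labelsEq_of_not_subset hK q lam hA (disjoint_empty_right _) hsub, inter_empty,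
    union_empty, linkEdges_empty, card_empty, pow_zero, one_mul, ← bot_eq_empty, symmDiff_bot,
    monomialMean, div_pow, ← pow_mul, mul_comm (N + 3), ← hcard, ← hE, pow_mul, Real.sq_sqrt hlam,
    inv_pow, div_eq_mul_inv]

theorem card_symmDiff_add_two_mul_card_inter {α : Type*} [DecidableEq α] (s t : Finset α) :
    #(symmDiff s t) + 2 * #(s ∩ t) = #s + #t := by
  have hs := card_sdiff_add_card_inter s t
  have ht := card_sdiff_add_card_inter t s
  rw [inter_comm] at ht
  rw [symmDiff_def, sup_eq_union, card_union_of_disjoint disjoint_sdiff_sdiff]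
  omega

theorem two_mul_card_linkEdges_inter_add_card_symmDiff (hij : i ≠ j) (hA : Disjoint {i, j} A)
    (hA' : Disjoint {i, j} A') (hcard : #A = N) (hcard' : #A' = N) :
    2 * #(linkEdges {i, j} (A ∩ A')) +
      #(symmDiff (linkEdges {i, j} A) (linkEdges {i, j} A')) = N * (N + 3) := by
  have hE := two_mul_card_linkEdges_pair hij hA
  have hE' := two_mul_card_linkEdges_pair hij hA'
  have hsymm := card_symmDiff_add_two_mul_card_inter (linkEdges {i, j} A) (linkEdges {i, j} A')
  rw [linkEdges_inter] at hsymm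
  rw [hcard] at hE
  rw [hcard'] at hE'
  omega

theorem mixedMoment_labelsEq_le (hK : K ≠ 0) (hq : 0 ≤ q) (hlam : 0 < lam) (hql : q + lam ≤ 1)
    (hij : i ≠ j) (hA : Disjoint {i, j} A) (hA' : Disjoint {i, j} A') (hcard : #A = N)
    (hcard' : #A' = N) (hne : A ≠ A') :
    mixedMoment q lam (labelsEq K i j) {i, j} A A' ≤
      monomialMean K N lam ^ 2 *
        ((K : ℝ) ^ #(A ∩ A') * withinNoise q lam ^ (#(A ∩ A') * (#(A ∩ A') + 3))) := by
  have hsub : ¬A ⊆ A' := fun h => hne (eq_of_subset_of_card_le h (hcard'.trans hcard.symm).le)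
  have hinter := two_mul_card_linkEdges_pair hij (hA.mono_right (inter_subset_left (s₂ := A')))
  have hexp := two_mul_card_linkEdges_inter_add_card_symmDiff hij hA hA' hcard hcard'
  have hunion : #(A ∪ A') + #(A ∩ A') = 2 * N := by
    rw [card_union_add_card_inter, hcard, hcard', two_mul]
  have hK0 : (K : ℝ) ≠ 0 := Nat.cast_ne_zero.2 hK
  set t := #(A ∩ A')
  rw [mixedMoment_labelsEq_of_not_subset hK q lam hA hA' hsub]
  calc _ ≤ ((lam * withinNoise q lam) ^ 2) ^ #(linkEdges {i, j} (A ∩ A')) *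
        lam ^ #(symmDiff (linkEdges {i, j} A) (linkEdges {i, j} A')) * ((K : ℝ)⁻¹) ^ #(A ∪ A') := by
        have := pbar_nonneg hq hlam.le hql
        gcongr
        exact pbar_le_sq_mul_withinNoise hq hlam hql
    _ = lam ^ (N * (N + 3)) * withinNoise q lam ^ (t * (t + 3)) *
        (((K : ℝ)⁻¹) ^ #(A ∪ A') * (((K : ℝ)⁻¹) ^ t * (K : ℝ) ^ t)) := by
        rw [← pow_mul, mul_pow, hinter, ← hexp, ← hinter, pow_add, ← mul_pow (K : ℝ)⁻¹,
          inv_mul_cancel₀ hK0]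
        ring
    _ = _ := by
        rw [← mul_assoc (_ ^ #(A ∪ A')), ← pow_add, hunion, sq_monomialMean K N hlam.le, div_pow,
          ← pow_mul, ← pow_mul, mul_comm (N + 3), inv_pow, div_eq_mul_inv]
        ring

theorem card_compl_pair (hij : i ≠ j) : #({i, j}ᶜ : Finset (Fin n)) = n - 2 := by
  rw [card_compl, card_pair hij, Fintype.card_fin]

theorem DeterminedOn.mixedMoment_self_le_sq_monomialMean_mul {S : Finset (Lab n K)}
    (hS : DeterminedOn S {i, j}) {d : ℕ} (hd : ∀ z ∈ S, #(({i, j} : Finset (Fin n)).image z) ≤ d)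
    (hK : K ≠ 0) (hq : 0 ≤ q) (hlam : 0 < lam) (hql : q + lam ≤ 1) (hij : i ≠ j)
    (hA : Disjoint {i, j} A) (hcard : #A = N) :
    mixedMoment q lam S {i, j} A A ≤ monomialMean K N lam ^ 2 *
      ∏ k ∈ range N, ((K : ℝ) ^ 2 * acrossNoise q lam ^ (N + 3) +
        ((k + d : ℕ) : ℝ) * (K * withinNoise q lam ^ (N + 3))) := by
  have hK0 : (K : ℝ) ≠ 0 := Nat.cast_ne_zero.2 hK
  have hle := hS.mixedMoment_self_le hd hq hlam hql (b := 3) (by rw [card_pair hij]) hA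
  rw [hcard] at hle
  refine hle.trans_eq ?_
  rw [sq_monomialMean K N hlam.le, pow_eq_prod_const (_ / _), ← prod_mul_distrib]
  refine prod_congr rfl fun k _ => ?_
  field_simp
  ring

theorem DeterminedOn.mixedMoment_self_le_choose_mul {S : Finset (Lab n K)}
    (hS : DeterminedOn S {i, j}) {d : ℕ} (hd : ∀ z ∈ S, #(({i, j} : Finset (Fin n)).image z) ≤ d)
    (hK : K ≠ 0) (hq : 0 ≤ q) (hlam : 0 < lam) (hql : q + lam ≤ 1) (hij : i ≠ j)
    (hA : A ∈ powersetCard N {i, j}ᶜ) {ρ : ℝ}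
    (hwithin : (N : ℝ) / (n - 2 : ℕ) * (K * withinNoise q lam ^ (N + 3)) ≤ 1 / (ρ * N))
    (hacross : (N : ℝ) / (n - 2 : ℕ) * ((K : ℝ) ^ 2 * acrossNoise q lam ^ (N + 3)) ≤ 1 / ρ) :
    mixedMoment q lam S {i, j} A A ≤ (n - 2).choose N * monomialMean K N lam ^ 2 *
      ((1 / ρ) ^ N * ∏ k ∈ range N, (1 + ((k + d : ℕ) : ℝ) / N)) := by
  obtain ⟨hAU, hcard⟩ := mem_powersetCard.1 hA
  have hγ : 0 ≤ acrossNoise q lam := acrossNoise_nonneg q hlam.le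
  have hβ : 0 ≤ withinNoise q lam := zero_le_one.trans (one_le_withinNoise hq hlam hql)
  have hself := hS.mixedMoment_self_le_sq_monomialMean_mul hd hK hq hlam hql hij
    (subset_compl_iff_disjoint_left.1 hAU) hcard
  set a := (K : ℝ) ^ 2 * acrossNoise q lam ^ (N + 3)
  set b := K * withinNoise q lam ^ (N + 3)
  have hprod : 0 ≤ ∏ k ∈ range N, (a + ((k + d : ℕ) : ℝ) * b) :=
    prod_nonneg fun k _ => by positivity
  have hone : 1 ≤ (n - 2).choose N * ((N : ℝ) / (n - 2 : ℕ)) ^ N :=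
    one_le_choose_mul_div_pow (hcard ▸ card_compl_pair hij ▸ card_le_card hAU)
  calc mixedMoment q lam S {i, j} A A
      ≤ monomialMean K N lam ^ 2 * ∏ k ∈ range N, (a + ((k + d : ℕ) : ℝ) * b) := hself
    _ ≤ monomialMean K N lam ^ 2 * ((n - 2).choose N * ((N : ℝ) / (n - 2 : ℕ)) ^ N *
          ∏ k ∈ range N, (a + ((k + d : ℕ) : ℝ) * b)) := by
        gcongr
        exact le_mul_of_one_le_left hprod hone
    _ ≤ monomialMean K N lam ^ 2 * ((n - 2).choose N *
          ((1 / ρ) ^ N * ∏ k ∈ range N, (1 + ((k + d : ℕ) : ℝ) / N))) := by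
        rw [mul_assoc (Nat.cast _ : ℝ)]
        gcongr _ * (_ * ?_)
        exact pow_mul_prod_le (by positivity) (by positivity) (by positivity) hacross hwithin d
    _ = _ := by ring

theorem sum_erase_mixedMoment_labelsEq_le (hK : K ≠ 0) (hN : N ≠ 0) (hq : 0 ≤ q) (hlam : 0 < lam)
    (hql : q + lam ≤ 1) (hij : i ≠ j) (hA : A ∈ powersetCard N {i, j}ᶜ) {ρ : ℝ} (hρ : 0 < ρ)
    (hwithin : (N : ℝ) / (n - 2 : ℕ) * (K * withinNoise q lam ^ (N + 3)) ≤ 1 / (ρ * N)) :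
    ∑ A' ∈ (powersetCard N {i, j}ᶜ).erase A, mixedMoment q lam (labelsEq K i j) {i, j} A A' ≤
      (n - 2).choose N * monomialMean K N lam ^ 2 *
        (1 + (1 + 1 / ρ) ^ N / withinNoise q lam) := by
  obtain ⟨hAU, hcard⟩ := mem_powersetCard.1 hA
  have hβ := one_le_withinNoise hq hlam hql
  have hle : (N : ℝ) / (n - 2 : ℕ) * K * withinNoise q lam ^ (N + 3) ≤ 1 / ρ := by
    rw [mul_assoc]
    refine hwithin.trans (one_div_le_one_div_of_le hρ (le_mul_of_one_le_right hρ.le ?_))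
    exact Nat.one_le_cast.2 (Nat.one_le_iff_ne_zero.2 hN)
  calc _ ≤ ∑ A' ∈ (powersetCard N {i, j}ᶜ).erase A, monomialMean K N lam ^ 2 *
        ((K : ℝ) ^ #(A ∩ A') * withinNoise q lam ^ (#(A ∩ A') * (#(A ∩ A') + 3))) := by
        refine sum_le_sum fun A' hA' => ?_
        obtain ⟨hne, hA'⟩ := mem_erase.1 hA'
        obtain ⟨hAU', hcard'⟩ := mem_powersetCard.1 hA'
        exact mixedMoment_labelsEq_le hK hq hlam hql hij (subset_compl_iff_disjoint_left.1 hAU)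
          (subset_compl_iff_disjoint_left.1 hAU') hcard hcard' hne.symm
    _ ≤ monomialMean K N lam ^ 2 * ((n - 2).choose N *
          ∑ t ∈ range N, N.choose t * (((N : ℝ) / (n - 2 : ℕ) * K) ^ t *
            withinNoise q lam ^ (t * (t + 3)))) := by
        rw [← mul_sum]
        gcongr
        have := sum_erase_inter_le hA
          (T := fun t => (K : ℝ) ^ t * withinNoise q lam ^ (t * (t + 3))) fun t => by positivity
        simpa only [card_powersetCard, card_compl_pair hij, ← mul_assoc, ← mul_pow] using this
    _ ≤ monomialMean K N lam ^ 2 * ((n - 2).choose N *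
          (1 + (1 + 1 / ρ) ^ N / withinNoise q lam)) := by
        gcongr
        exact sum_choose_mul_pow_le (by positivity) hβ hle
    _ = _ := by ring

end MomentBounds

section Variance

variable {n K N : ℕ} {q lam : ℝ} {i j : Fin n}

theorem expecEq_cliqueStat (hK : K ≠ 0) (hN : N ≠ 0) (q : ℝ) (hlam : 0 ≤ lam) (hij : i ≠ j) :
    expecEq n K q lam i j (fun _ y => cliqueStat n q (N + 2) (Nat.le_add_left 2 N) i j y) =
      N.factorial * (n - 2).choose N * monomialMean K N lam := by
  have hmean : ∀ A ∈ powersetCard N ({i, j}ᶜ : Finset (Fin n)),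
      mixedMoment q lam (labelsEq K i j) {i, j} A ∅ = monomialMean K N lam := fun A hA => by
    obtain ⟨hAU, hcard⟩ := mem_powersetCard.1 hA
    exact mixedMoment_labelsEq_empty hK hN q hlam hij (subset_compl_iff_disjoint_left.1 hAU) hcard
  rw [expecEq_eq_expect hK, expect_edgeExpec_cliqueStat N q lam _ hij, sum_congr rfl hmean,
    sum_const, card_powersetCard, card_compl_pair hij, nsmul_eq_mul, mul_assoc]

theorem expecNe_cliqueStat (hK : K ≠ 0) (hN : N ≠ 0) (q lam : ℝ) (hij : i ≠ j) :
    expecNe n K q lam i j (fun _ y => cliqueStat n q (N + 2) (Nat.le_add_left 2 N) i j y) = 0 := by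
  rw [expecNe_eq_expect hK, expect_edgeExpec_cliqueStat N q lam _ hij]
  refine mul_eq_zero_of_right _ (sum_eq_zero fun A hA => ?_)
  obtain ⟨hAU, hcard⟩ := mem_powersetCard.1 hA
  refine mixedMoment_labelsNe_of_not_subset q lam (subset_compl_iff_disjoint_left.1 hAU) fun h => ?_
  exact hN (by rw [← hcard, subset_empty.1 h, card_empty])

theorem expect_edgeExpec_cliqueStat_sq_le (S : Finset (Lab n K)) (hij : i ≠ j) {μ c : ℝ}
    (h : ∀ A ∈ powersetCard N {i, j}ᶜ,
      ∑ A' ∈ powersetCard N {i, j}ᶜ, mixedMoment q lam S {i, j} A A' ≤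
        (n - 2).choose N * μ ^ 2 * c) :
    𝔼 z ∈ S, edgeExpec q lam z
        (fun y => cliqueStat n q (N + 2) (Nat.le_add_left 2 N) i j y ^ 2) ≤
      (N.factorial * (n - 2).choose N * μ) ^ 2 * c := by
  have hsum := sum_le_card_nsmul _ _ _ h
  rw [card_powersetCard, card_compl_pair hij, nsmul_eq_mul] at hsum
  calc _ ≤ (N.factorial : ℝ) ^ 2 * ((n - 2).choose N * ((n - 2).choose N * μ ^ 2 * c)) := by
        rw [expect_edgeExpec_cliqueStat_sq N q lam S hij]
        gcongr
    _ = _ := by ring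

theorem sum_mixedMoment_labelsEq_le (hK : K ≠ 0) (hN : N ≠ 0) (hq : 0 ≤ q) (hlam : 0 < lam)
    (hql : q + lam ≤ 1) (hij : i ≠ j) {A : Finset (Fin n)} (hA : A ∈ powersetCard N {i, j}ᶜ)
    {ρ : ℝ} (hρ : 0 < ρ)
    (hwithin : (N : ℝ) / (n - 2 : ℕ) * (K * withinNoise q lam ^ (N + 3)) ≤ 1 / (ρ * N))
    (hacross : (N : ℝ) / (n - 2 : ℕ) * ((K : ℝ) ^ 2 * acrossNoise q lam ^ (N + 3)) ≤ 1 / ρ) :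
    ∑ A' ∈ powersetCard N {i, j}ᶜ, mixedMoment q lam (labelsEq K i j) {i, j} A A' ≤
      (n - 2).choose N * monomialMean K N lam ^ 2 *
        ((2 / ρ) ^ N + (1 + (1 + 1 / ρ) ^ N / withinNoise q lam)) := by
  have hlabels : ∀ z ∈ labelsEq K i j, #(({i, j} : Finset (Fin n)).image z) ≤ 1 := fun z hz => by
    simp [image_insert, (mem_filter.1 hz).2]
  have hprod : (1 / ρ) ^ N * ∏ k ∈ range N, (1 + ((k + 1 : ℕ) : ℝ) / N) ≤ (2 / ρ) ^ N := by
    rw [← one_div_mul_eq_div ρ 2, mul_pow]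
    gcongr
    exact prod_one_add_succ_div_le N
  rw [← add_sum_erase _ _ hA, mul_add]
  refine add_le_add ?_ (sum_erase_mixedMoment_labelsEq_le hK hN hq hlam hql hij hA hρ hwithin)
  refine ((determinedOn_labelsEq K i j).mixedMoment_self_le_choose_mul hlabels hK hq hlam hql hij
    hA hwithin hacross).trans ?_
  gcongr

theorem sum_mixedMoment_labelsNe_le (hK : K ≠ 0) (hq : 0 ≤ q) (hlam : 0 < lam)
    (hql : q + lam ≤ 1) (hij : i ≠ j) {A : Finset (Fin n)} (hA : A ∈ powersetCard N {i, j}ᶜ)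
    {ρ : ℝ} (hρ : 0 < ρ)
    (hwithin : (N : ℝ) / (n - 2 : ℕ) * (K * withinNoise q lam ^ (N + 3)) ≤ 1 / (ρ * N))
    (hacross : (N : ℝ) / (n - 2 : ℕ) * ((K : ℝ) ^ 2 * acrossNoise q lam ^ (N + 3)) ≤ 1 / ρ) :
    ∑ A' ∈ powersetCard N {i, j}ᶜ, mixedMoment q lam (labelsNe K i j) {i, j} A A' ≤
      (n - 2).choose N * monomialMean K N lam ^ 2 * ((2 / ρ) ^ N + (1 / ρ) ^ N) := by
  obtain ⟨hAU, hcard⟩ := mem_powersetCard.1 hA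
  have hprod : (1 / ρ) ^ N * ∏ k ∈ range N, (1 + ((k + 2 : ℕ) : ℝ) / N) ≤
      (2 / ρ) ^ N + (1 / ρ) ^ N := by
    rw [← one_div_mul_eq_div ρ 2, mul_pow, ← mul_add_one]
    gcongr
    exact prod_one_add_add_two_div_le N
  rw [sum_eq_single_of_mem A hA fun A' hA' hne => mixedMoment_labelsNe_of_not_subset q lam
    (subset_compl_iff_disjoint_left.1 hAU) fun hsub => hne.symm (eq_of_subset_of_card_le hsub
      ((mem_powersetCard.1 hA').2.trans hcard.symm).le)]
  refine ((determinedOn_labelsNe K i j).mixedMoment_self_le_choose_mul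
    (fun z _ => card_image_le.trans card_le_two) hK hq hlam hql hij hA hwithin hacross).trans ?_
  gcongr

theorem varEq_cliqueStat_le (hK : K ≠ 0) (hN : N ≠ 0) (hq : 0 ≤ q) (hlam : 0 < lam)
    (hql : q + lam ≤ 1) (hij : i ≠ j) {ρ : ℝ} (hρ : 0 < ρ)
    (hwithin : (N : ℝ) / (n - 2 : ℕ) * (K * withinNoise q lam ^ (N + 3)) ≤ 1 / (ρ * N))
    (hacross : (N : ℝ) / (n - 2 : ℕ) * ((K : ℝ) ^ 2 * acrossNoise q lam ^ (N + 3)) ≤ 1 / ρ) :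
    varEq n K q lam i j (fun _ y => cliqueStat n q (N + 2) (Nat.le_add_left 2 N) i j y) ≤
      expecEq n K q lam i j
          (fun _ y => cliqueStat n q (N + 2) (Nat.le_add_left 2 N) i j y) ^ 2 *
        ((2 / ρ) ^ N + (1 + 1 / ρ) ^ N / withinNoise q lam) := by
  have hsq := expect_edgeExpec_cliqueStat_sq_le (labelsEq K i j) hij fun A hA =>
    sum_mixedMoment_labelsEq_le hK hN hq hlam hql hij hA hρ hwithin hacross
  rw [varEq, expecEq_eq_expect hK q lam i j fun y => cliqueStat n q (N + 2) _ i j y ^ 2,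
    expecEq_cliqueStat hK hN q hlam.le hij]
  linarith

theorem varNe_cliqueStat_le (hK : K ≠ 0) (hN : N ≠ 0) (hq : 0 ≤ q) (hlam : 0 < lam)
    (hql : q + lam ≤ 1) (hij : i ≠ j) {ρ : ℝ} (hρ : 0 < ρ)
    (hwithin : (N : ℝ) / (n - 2 : ℕ) * (K * withinNoise q lam ^ (N + 3)) ≤ 1 / (ρ * N))
    (hacross : (N : ℝ) / (n - 2 : ℕ) * ((K : ℝ) ^ 2 * acrossNoise q lam ^ (N + 3)) ≤ 1 / ρ) :
    varNe n K q lam i j (fun _ y => cliqueStat n q (N + 2) (Nat.le_add_left 2 N) i j y) ≤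
      expecEq n K q lam i j
          (fun _ y => cliqueStat n q (N + 2) (Nat.le_add_left 2 N) i j y) ^ 2 *
        ((2 / ρ) ^ N + (1 / ρ) ^ N) := by
  have hsq := expect_edgeExpec_cliqueStat_sq_le (labelsNe K i j) hij fun A hA =>
    sum_mixedMoment_labelsNe_le hK hq hlam hql hij hA hρ hwithin hacross
  rw [varNe, expecNe_eq_expect hK q lam i j fun y => cliqueStat n q (N + 2) _ i j y ^ 2,
    expecNe_cliqueStat hK hN q lam hij, expecEq_cliqueStat hK hN q hlam.le hij]
  linarith

end Variance

section Parameters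

theorem rpow_cast_add_one_div_two {x : ℝ} (hx : 0 ≤ x) (N : ℕ) :
    x ^ ((((N + 2 : ℕ) : ℝ) + 1) / 2) = √x ^ (N + 3) := by
  rw [← Nat.cast_add_one, Real.rpow_div_two_eq_sqrt _ hx, Real.rpow_natCast]

theorem factorial_mul_choose_eq_div {N u : ℕ} (h : N ≤ u) :
    (N.factorial : ℝ) * u.choose N = u.factorial / (u - N).factorial := by
  rw [Nat.cast_choose ℝ h]
  field_simp

variable {q lam : ℝ}

theorem withinNoise_eq_sqrt_div_sqrt (q : ℝ) (hlam : 0 < lam) :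
    withinNoise q lam = √(1 + q * (1 - q) / lam) / √lam := by
  have hfactor : q * (1 - q) + lam = lam * (1 + q * (1 - q) / lam) := by
    field_simp
    ring
  rw [withinNoise, hfactor, Real.sqrt_mul hlam.le, mul_div_right_comm, Real.sqrt_div_self',
    one_div_mul_eq_div]

theorem withinNoise_condition {K N : ℕ} {u ρ : ℝ} (hK : K ≠ 0) (hN : N ≠ 0) (hu : 0 < u)
    (hρ : 0 < ρ) (hlam : 0 < lam)
    (h : ρ * (N : ℝ) ^ 2 * √(1 + q * (1 - q) / lam) ^ (N + 3) ≤ u * √lam ^ (N + 3) / K) :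
    (N : ℝ) / u * (K * withinNoise q lam ^ (N + 3)) ≤ 1 / (ρ * N) := by
  have hl : 0 < √lam := Real.sqrt_pos.2 hlam
  rw [withinNoise_eq_sqrt_div_sqrt q hlam, div_pow, ← mul_div_assoc, div_mul_div_comm,
    div_le_div_iff₀ (by positivity) (by positivity)]
  rw [le_div_iff₀ (by positivity)] at h
  linarith

theorem acrossNoise_condition {K N : ℕ} {u ρ : ℝ} (hK : K ≠ 0) (hN : N ≠ 0) (hu : 0 < u)
    (hρ : 0 < ρ) (hlam : 0 < lam)
    (h : ρ * N ≤ u / (K : ℝ) ^ 2 * √(lam ^ 2 / (q * (1 - q))) ^ (N + 3)) :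
    (N : ℝ) / u * ((K : ℝ) ^ 2 * acrossNoise q lam ^ (N + 3)) ≤ 1 / ρ := by
  have hinv : √(lam ^ 2 / (q * (1 - q))) = (acrossNoise q lam)⁻¹ := by
    rw [acrossNoise, inv_div, Real.sqrt_div (sq_nonneg lam), Real.sqrt_sq hlam.le]
  rw [hinv] at h
  have hN0 : (0 : ℝ) < N := Nat.cast_pos.2 (Nat.pos_of_ne_zero hN)
  -- With `q̄ = 0` the right side of `h` is `0` (division by zero).
  have hγ : 0 < acrossNoise q lam := by
    refine (acrossNoise_nonneg q hlam.le).lt_of_ne fun h0 => ?_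
    rw [← h0, inv_zero, zero_pow (by omega), mul_zero] at h
    exact (mul_pos hρ hN0).not_ge h
  rw [inv_pow, ← div_eq_mul_inv, div_div, le_div_iff₀ (by positivity)] at h
  rw [div_mul_eq_mul_div, div_le_div_iff₀ hu hρ]
  linarith

theorem one_add_pow_div_withinNoise_le {N : ℕ} {ρ : ℝ} (hN : N ≠ 0) (hρ : 0 < ρ)
    (hq : 0 ≤ q * (1 - q)) (hlam : 0 < lam) :
    (1 + 1 / ρ) ^ N / withinNoise q lam ≤
      (N * (1 + q * (1 - q) / lam) ^ (N + 3) + 1 / ρ) ^ N *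
        (1 + q * (1 - q) / lam) ^ ((1 : ℝ) / 2) * lam ^ ((1 : ℝ) / 2) := by
  set a := 1 + q * (1 - q) / lam with ha
  have ha1 : 1 ≤ a := le_add_of_nonneg_right (by positivity)
  have hsqrt : 1 ≤ √a := Real.one_le_sqrt.2 ha1
  have hbase : 1 ≤ N * a ^ (N + 3) :=
    one_le_mul_of_one_le_of_one_le (Nat.one_le_cast.2 (Nat.pos_of_ne_zero hN)) (one_le_pow₀ ha1)
  rw [withinNoise_eq_sqrt_div_sqrt q hlam, ← ha, div_div_eq_mul_div, mul_div_assoc, mul_assoc,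
    ← Real.sqrt_eq_rpow, ← Real.sqrt_eq_rpow]
  gcongr
  exact (div_le_self (Real.sqrt_nonneg _) hsqrt).trans
    (le_mul_of_one_le_left (Real.sqrt_nonneg _) hsqrt)

end Parameters

theorem statement2_general (n K m : ℕ) (q lam : ℝ) (i j : Fin n)
    (hq0 : 0 ≤ q) (hql : q + lam ≤ 1) (hlam : 0 < lam) (hK : 2 ≤ K)
    (hm3 : 3 ≤ m) (hmn : m ≤ n) (hij : i ≠ j) :
    expecEq n K q lam i j (fun _ y => cliqueStat n q m (by omega) i j y) =
      (Nat.factorial (n - 2) : ℝ) / (Nat.factorial (n - m)) *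
        (lam ^ (((m : ℝ) + 1) / 2) / K) ^ (m - 2) ∧
    expecNe n K q lam i j (fun _ y => cliqueStat n q m (by omega) i j y) = 0 ∧
    ∀ ρ : ℝ, 0 < ρ →
      ((n : ℝ) - 2) * lam ^ (((m : ℝ) + 1) / 2) / K ≥
        ρ * ((m : ℝ) - 2) ^ 2 * (1 + q * (1 - q) / lam) ^ (((m : ℝ) + 1) / 2) →
      ((n : ℝ) - 2) / (K : ℝ) ^ 2 * (lam ^ 2 / (q * (1 - q))) ^ (((m : ℝ) + 1) / 2) ≥
        ρ * ((m : ℝ) - 2) →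
      (varEq n K q lam i j (fun _ y => cliqueStat n q m (by omega) i j y) ≤
        expecEq n K q lam i j (fun _ y => cliqueStat n q m (by omega) i j y) ^ 2 *
          ((2 / ρ) ^ (m - 2) +
            (((m : ℝ) - 2) * (1 + q * (1 - q) / lam) ^ (m + 1) + 1 / ρ) ^ (m - 2) *
              (1 + q * (1 - q) / lam) ^ ((1 : ℝ) / 2) * lam ^ ((1 : ℝ) / 2)) ∧
       varNe n K q lam i j (fun _ y => cliqueStat n q m (by omega) i j y) ≤
        expecEq n K q lam i j (fun _ y => cliqueStat n q m (by omega) i j y) ^ 2 *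
          ((2 / ρ) ^ (m - 2) + (1 / ρ) ^ (m - 2))) := by
  obtain ⟨N, rfl⟩ : ∃ N, m = N + 2 := ⟨m - 2, by omega⟩
  have hK0 : K ≠ 0 := by omega
  have hN : N ≠ 0 := by omega
  have hu : ((n - 2 : ℕ) : ℝ) = n - 2 := by rw [Nat.cast_sub (by omega), Nat.cast_two]
  have hu0 : (0 : ℝ) < n - 2 := hu ▸ Nat.cast_pos.2 (by omega)
  have hqbar := mul_one_sub_nonneg hq0 hlam.le hql
  rw [rpow_cast_add_one_div_two hlam.le, rpow_cast_add_one_div_two (by positivity),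
    rpow_cast_add_one_div_two (by positivity), Nat.cast_add, Nat.cast_two, add_sub_cancel_right,
    Nat.add_sub_cancel]
  refine ⟨?_, expecNe_cliqueStat hK0 hN q lam hij, fun ρ hρ hwithin hacross => ?_⟩
  · rw [expecEq_cliqueStat hK0 hN q hlam.le hij, factorial_mul_choose_eq_div (by omega),
      Nat.sub_sub, add_comm 2, monomialMean]
  · have hw := withinNoise_condition hK0 hN hu0 hρ hlam hwithin
    have ha := acrossNoise_condition hK0 hN hu0 hρ hlam hacross
    rw [← hu] at hw ha
    refine ⟨(varEq_cliqueStat_le hK0 hN hq0 hlam hql hij hρ hw ha).trans ?_,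
      varNe_cliqueStat_le hK0 hN hq0 hlam hql hij hρ hw ha⟩
    gcongr
    exact one_add_pow_div_withinNoise_le hN hρ hqbar hlam

theorem statement2 (n K m : ℕ) (q lam : ℝ) (i j : Fin n)
    (hq0 : 0 ≤ q) (hq : q ≤ 1 / 2) (hql : q + 2 * lam ≤ 1) (hlam : 0 < lam)
    (hm3 : 3 ≤ m) (hmK : m ≤ K) (hKn : K ≤ n) (hij : i < j) :
    expecEq n K q lam i j (fun _ y => cliqueStat n q m (by omega) i j y) =
      (Nat.factorial (n - 2) : ℝ) / (Nat.factorial (n - m)) *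
        (lam ^ (((m : ℝ) + 1) / 2) / K) ^ (m - 2) ∧
    expecNe n K q lam i j (fun _ y => cliqueStat n q m (by omega) i j y) = 0 ∧
    ∀ ρ : ℝ, 0 < ρ →
      ((n : ℝ) - 2) * lam ^ (((m : ℝ) + 1) / 2) / K ≥
        ρ * ((m : ℝ) - 2) ^ 2 * (1 + q * (1 - q) / lam) ^ (((m : ℝ) + 1) / 2) →
      ((n : ℝ) - 2) / (K : ℝ) ^ 2 * (lam ^ 2 / (q * (1 - q))) ^ (((m : ℝ) + 1) / 2) ≥
        ρ * ((m : ℝ) - 2) →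
      (varEq n K q lam i j (fun _ y => cliqueStat n q m (by omega) i j y) ≤
        expecEq n K q lam i j (fun _ y => cliqueStat n q m (by omega) i j y) ^ 2 *
          ((2 / ρ) ^ (m - 2) +
            (((m : ℝ) - 2) * (1 + q * (1 - q) / lam) ^ (m + 1) + 1 / ρ) ^ (m - 2) *
              (1 + q * (1 - q) / lam) ^ ((1 : ℝ) / 2) * lam ^ ((1 : ℝ) / 2)) ∧
       varNe n K q lam i j (fun _ y => cliqueStat n q m (by omega) i j y) ≤
        expecEq n K q lam i j (fun _ y => cliqueStat n q m (by omega) i j y) ^ 2 *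
          ((2 / ρ) ^ (m - 2) + (1 / ρ) ^ (m - 2))) :=
  statement2_general n K m q lam i j hq0 (by linarith) hlam (by omega) hm3 (hmK.trans hKn) hij.ne

end SBM
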